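/- arXiv:1802.08436 — 3 statements merged into one kernel-verified Lean document; each statement's English description precedes it below -/
import Mathlib

section
/- Let F be a field of characteristic p > 0 with p-degree at most 1, let F ⊆ K be a finite purely inseparable field extension, and let L be a field containing K that is finitely generated over F and separable over K. Let E be a perfect closure of K. Then the local Artin ring L ⊗_F E has embedding dimension at most 1. -/
open scoped KaehlerDifferential TensorProduct

/-- A field extension `K ⊆ L` is separable (separably generated) if it admits a
transcendence basis `s` such that `L` is separable algebraic over `K(s)`. -/
def IsSeparablyGenerated (K L : Type*) [Field K] [Field L] [Algebra K L] : Prop :=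
  ∃ s : Set L, AlgebraicIndependent K ((↑) : s → L) ∧
    Algebra.IsSeparable (IntermediateField.adjoin K s) L

open Polynomial in
lemma aux_finrank_adjoin {M F : Type*} [Field M] [Field F] [Algebra M F] (p : ℕ) [Fact p.Prime]
    [CharP F p] (h : ∀ x : F, x ^ p ∈ (algebraMap M F).range) (x : F)
    (hx : x ∉ (algebraMap M F).range) :
    IsIntegral M x ∧ Module.finrank M (IntermediateField.adjoin M {x}) = p := by
  obtain ⟨a, ha⟩ := h x
  have hp : p.Prime := Fact.out
  have hint : IsIntegral M x := ⟨X ^ p - C a, monic_X_pow_sub_C a hp.ne_zero, by simp [ha]⟩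
  refine ⟨hint, ?_⟩
  have hirr : Irreducible (X ^ p - C a : M[X]) := by
    apply X_pow_sub_C_irreducible_of_prime hp
    intro b hb
    apply hx
    refine ⟨b, ?_⟩
    have : algebraMap M F b ^ p = x ^ p := by rw [← map_pow, hb, ha]
    exact frobenius_inj F p this
  rw [IntermediateField.adjoin.finrank hint,
    ← minpoly.eq_of_irreducible_of_monic hirr (by simp [ha]) (monic_X_pow_sub_C a hp.ne_zero),
    natDegree_X_pow_sub_C]

lemma aux_unramified {M F : Type*} [Field M] [Field F] [Algebra M F] (p : ℕ) [Fact p.Prime]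
    [CharP F p] (h : ∀ x : F, x ^ p ∈ (algebraMap M F).range)
    [Algebra.FormallyUnramified M F] (x : F) : x ∈ (algebraMap M F).range := by
  by_contra hx
  obtain ⟨N, -, hN⟩ := zorn_le_nonempty₀ {N : IntermediateField M F | x ∉ N} (by
    intro c hc hchain y hy
    have : Nonempty c := ⟨⟨y, hy⟩⟩
    refine ⟨⨆ i : c, (i : IntermediateField M F), ?_, fun z hz => le_iSup (fun i : c => (i : IntermediateField M F)) ⟨z, hz⟩⟩
    intro hx'
    rw [← SetLike.mem_coe, IntermediateField.coe_iSup_of_directed hchain.directed] at hx'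
    obtain ⟨i, hi⟩ := Set.mem_iUnion.1 hx'
    exact hc i.2 hi) ⊥ (by
      intro hb
      rw [IntermediateField.mem_bot] at hb
      exact hx hb)
  have hxN : x ∉ N := hN.prop
  have hmem : ∀ y : F, y ∈ (algebraMap N F).range ↔ y ∈ N := by
    intro y
    constructor
    · rintro ⟨z, rfl⟩; exact z.2
    · intro hy; exact ⟨⟨y, hy⟩, rfl⟩
  have h' : ∀ x : F, x ^ p ∈ (algebraMap N F).range := by
    intro x
    obtain ⟨a, ha⟩ := h x
    rw [hmem, ← ha]
    exact N.algebraMap_mem a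
  obtain ⟨hxi, hxr⟩ := aux_finrank_adjoin p h' x (by rwa [hmem])
  have htop : IntermediateField.adjoin N {x} = ⊤ := by
    rw [eq_top_iff]
    intro y _
    by_cases hy : y ∈ N
    · exact (IntermediateField.adjoin N {x}).algebraMap_mem ⟨y, hy⟩
    obtain ⟨hyi, hyr⟩ := aux_finrank_adjoin p h' y (by rwa [hmem])
    have hxy : x ∈ IntermediateField.adjoin N {y} := by
      by_contra hcon
      have hle : N ≤ (IntermediateField.adjoin N {y}).restrictScalars M := by
        intro z hz
        exact (IntermediateField.adjoin N {y}).algebraMap_mem ⟨z, hz⟩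
      have := hN.le_of_ge (y := (IntermediateField.adjoin N {y}).restrictScalars M) hcon hle
      exact hy (this (IntermediateField.mem_adjoin_simple_self N y))
    have hle : IntermediateField.adjoin N {x} ≤ IntermediateField.adjoin N {y} := by
      rwa [IntermediateField.adjoin_simple_le_iff]
    have := IntermediateField.adjoin.finiteDimensional hyi
    rw [IntermediateField.eq_of_le_of_finrank_eq hle (by rw [hxr, hyr])]
    exact IntermediateField.mem_adjoin_simple_self N y
  have : FiniteDimensional N F := by
    have := IntermediateField.adjoin.finiteDimensional hxi
    rw [htop] at this
    exact Module.Finite.equiv (IntermediateField.topEquiv (F := N) (E := F)).toLinearEquiv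
  have : Algebra.FormallyUnramified N F := Algebra.FormallyUnramified.of_restrictScalars M N F
  have : CharP N p := (RingHom.charP_iff (algebraMap N F) (algebraMap N F).injective p).2 inferInstance
  have : ExpChar N p := ExpChar.prime Fact.out
  have : IsPurelyInseparable N F := by
    rw [isPurelyInseparable_iff_pow_mem N p]
    intro y
    exact ⟨1, by simpa using h' y⟩
  have := Algebra.FormallyUnramified.range_eq_top_of_isPurelyInseparable N F
  exact hxN ((hmem x).1 (this ▸ Subring.mem_top x))

lemma aux_pdeg (F : Type*) [Field F] (p : ℕ) [Fact p.Prime] [CharP F p]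
    (hpdeg : Module.rank F (Ω[F⁄ℤ]) ≤ 1) :
    Module.finrank (frobenius F p).fieldRange F ≠ 0 ∧
      Module.finrank (frobenius F p).fieldRange F ≤ p := by
  have hp : p.Prime := Fact.out
  have hgen : ∃ t : F, ∀ x : F, ∃ c : F, KaehlerDifferential.D ℤ F x = c • KaehlerDifferential.D ℤ F t := by
    rw [rank_le_one_iff] at hpdeg
    obtain ⟨v, hv⟩ := hpdeg
    by_cases hz : ∃ t, KaehlerDifferential.D ℤ F t ≠ 0
    · obtain ⟨t, ht⟩ := hz
      refine ⟨t, fun x => ?_⟩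
      obtain ⟨r, hr⟩ := hv (KaehlerDifferential.D ℤ F t)
      obtain ⟨s, hs⟩ := hv (KaehlerDifferential.D ℤ F x)
      have hr0 : r ≠ 0 := by rintro rfl; exact ht (by rw [← hr, zero_smul])
      exact ⟨s * r⁻¹, by rw [← hr, ← hs, smul_smul, mul_assoc, inv_mul_cancel₀ hr0, mul_one]⟩
    · push Not at hz
      exact ⟨0, fun x => ⟨0, by rw [hz, zero_smul]⟩⟩
  obtain ⟨t, ht⟩ := hgen
  set P := (frobenius F p).fieldRange with hP
  have hfr : ∀ x : F, x ^ p ∈ (algebraMap P F).range := fun x => ⟨⟨x ^ p, ⟨x, rfl⟩⟩, rfl⟩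
  let M := IntermediateField.adjoin P {t}
  have hM : Algebra.FormallyUnramified M F := by
    rw [Algebra.formallyUnramified_iff]
    rw [← not_nontrivial_iff_subsingleton]
    intro hnt
    have hzero : ∀ x, KaehlerDifferential.D M F x = 0 := by
      intro x
      obtain ⟨c, hc⟩ := ht x
      have h1 := congrArg (KaehlerDifferential.map ℤ M F F) hc
      rw [map_smul, KaehlerDifferential.map_D, KaehlerDifferential.map_D] at h1
      simp only [Algebra.algebraMap_self, RingHom.id_apply] at h1
      rw [h1]
      have h2 := (KaehlerDifferential.D M F).map_algebraMap
        (⟨t, IntermediateField.mem_adjoin_simple_self P t⟩ : M)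
      have h3 : algebraMap M F ⟨t, IntermediateField.mem_adjoin_simple_self P t⟩ = t := rfl
      rw [h3] at h2
      rw [h2, smul_zero]
    have hspan := KaehlerDifferential.span_range_derivation M F
    have : Set.range (KaehlerDifferential.D M F) ⊆ {0} := by
      rintro _ ⟨x, rfl⟩; exact hzero x
    have h4 := Submodule.span_mono (R := F) this
    rw [hspan, Submodule.span_zero_singleton] at h4
    exact bot_ne_top (top_le_iff.1 h4).symm.symm
  have hMtop : M = ⊤ := by
    rw [eq_top_iff]
    intro x _
    obtain ⟨z, rfl⟩ := aux_unramified (M := M) p (fun x => by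
      obtain ⟨z, hz⟩ := hfr x
      exact ⟨algebraMap P M z, hz⟩) x
    exact z.2
  by_cases htP : t ∈ (algebraMap P F).range
  · have hb : M = ⊥ := by
      rw [IntermediateField.adjoin_simple_eq_bot_iff, IntermediateField.mem_bot]
      exact htP
    have : Module.finrank P F = 1 := by
      rw [← IntermediateField.finrank_top', ← hMtop, hb, IntermediateField.finrank_bot]
    rw [this]
    exact ⟨one_ne_zero, hp.one_le⟩
  · obtain ⟨_, h2⟩ := aux_finrank_adjoin p hfr t htP
    have : Module.finrank P F = p := by
      rw [← IntermediateField.finrank_top', ← hMtop, h2]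
    rw [this]
    exact ⟨hp.ne_zero, le_rfl⟩

lemma aux_pdeg_ext (F K : Type*) [Field F] [Field K] [Algebra F K] [FiniteDimensional F K]
    (p : ℕ) [Fact p.Prime] [CharP F p] [CharP K p] :
    Module.finrank (frobenius K p).fieldRange K = Module.finrank (frobenius F p).fieldRange F := by
  let A : Subfield K := (algebraMap F K).fieldRange
  have h1 : A.map (frobenius K p) ≤ A := by
    rintro _ ⟨_, ⟨x, rfl⟩, rfl⟩
    exact ⟨x ^ p, by simp [frobenius_def]⟩
  have h2 : A.map (frobenius K p) ≤ (frobenius K p).fieldRange := by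
    rintro _ ⟨y, -, rfl⟩; exact ⟨y, rfl⟩
  have h3 := Subfield.relfinrank_mul_finrank_top h1
  have h4 := Subfield.relfinrank_mul_finrank_top h2
  have h5 : (A.map (frobenius K p)).relfinrank (frobenius K p).fieldRange = Module.finrank A K := by
    rw [RingHom.fieldRange_eq_map, Subfield.relfinrank_map_map, Subfield.relfinrank_top_right]
  have h6 : (A.map (frobenius K p)).relfinrank A = Module.finrank (frobenius F p).fieldRange F := by
    have : A.map (frobenius K p) = ((frobenius F p).fieldRange).map (algebraMap F K) := by
      ext z
      constructor
      · rintro ⟨_, ⟨x, rfl⟩, rfl⟩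
        exact ⟨x ^ p, ⟨x, rfl⟩, by simp [frobenius_def]⟩
      · rintro ⟨_, ⟨x, rfl⟩, rfl⟩
        exact ⟨algebraMap F K x, ⟨x, rfl⟩, by simp [frobenius_def]⟩
    rw [this]
    have hA : A = (⊤ : Subfield F).map (algebraMap F K) := RingHom.fieldRange_eq_map _
    rw [hA, Subfield.relfinrank_map_map, Subfield.relfinrank_top_right]
  have h7 : Module.finrank A K ≠ 0 := by
    have : Module.Finite A K := by
      let : Algebra F A := (algebraMap F K).rangeRestrictField.toAlgebra
      have : IsScalarTower F A K := IsScalarTower.of_algebraMap_eq (fun _ => rfl)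
      exact Module.Finite.of_restrictScalars_finite F A K
    exact Module.finrank_pos.ne'
  rw [h6, ← h4, h5, mul_comm] at h3
  exact (Nat.eq_of_mul_eq_mul_left (Nat.pos_of_ne_zero h7) h3).symm

lemma aux_gen (F K : Type*) [Field F] [Field K] [Algebra F K] [FiniteDimensional F K]
    (p : ℕ) [Fact p.Prime] [CharP F p] [CharP K p] (hpdeg : Module.rank F (Ω[F⁄ℤ]) ≤ 1) :
    ∃ a : K, ∀ S : Subfield K, (∀ x : K, x ^ p ∈ S) → a ∈ S → S = ⊤ := by
  obtain ⟨h0, h1⟩ := aux_pdeg F p hpdeg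
  rw [← aux_pdeg_ext F K p] at h0 h1
  set P := (frobenius K p).fieldRange with hP
  have hfr : ∀ x : K, x ^ p ∈ (algebraMap P K).range := fun x => ⟨⟨x ^ p, ⟨x, rfl⟩⟩, rfl⟩
  have hfin : FiniteDimensional P K := Module.finite_of_finrank_pos (Nat.pos_of_ne_zero h0)
  by_cases ha : ∃ a : K, a ∉ (algebraMap P K).range
  · obtain ⟨a, ha⟩ := ha
    refine ⟨a, fun S hS haS => ?_⟩
    obtain ⟨_, h2⟩ := aux_finrank_adjoin p hfr a ha
    have htop : IntermediateField.adjoin P {a} = ⊤ := by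
      apply IntermediateField.eq_of_le_of_finrank_le le_top
      rw [h2, IntermediateField.finrank_top']
      exact h1
    have hPS : P ≤ S := by rintro _ ⟨x, rfl⟩; exact hS x
    have hle : IntermediateField.adjoin P {a} ≤ Subfield.extendScalars hPS := by
      rw [IntermediateField.adjoin_simple_le_iff]; exact haS
    rw [eq_top_iff]
    intro x _
    have : x ∈ IntermediateField.adjoin P {a} := by rw [htop]; trivial
    exact hle this
  · push Not at ha
    refine ⟨0, fun S hS _ => ?_⟩
    rw [eq_top_iff]
    intro x _
    obtain ⟨⟨_, y, rfl⟩, rfl⟩ := ha x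
    exact hS y

lemma aux_unit_or_nil {k L E : Type*} [Field k] [Field L] [Field E] [Algebra k L] [Algebra k E]
    [IsPurelyInseparable k E] (x : L ⊗[k] E) : IsUnit x ∨ IsNilpotent x := by
  obtain ⟨n, hn, y, hy⟩ := IsPurelyInseparable.exists_pow_mem_range_tensorProduct x
  by_cases h0 : y = 0
  · right
    exact ⟨n, by rw [← hy, h0, map_zero]⟩
  · left
    have : IsUnit (x ^ n) := by
      rw [← hy]
      exact (IsUnit.mk0 y h0).map _
    exact (isUnit_pow_iff hn.ne').1 this

lemma aux_red_loc {K A M E : Type*} [Field K] [CommRing A] [Field M] [CommRing E] [Algebra K A]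
    [Algebra K M] [Algebra K E] (f : A →ₐ[K] M) (hf : Function.Injective f)
    (hfrac : ∀ m : M, ∃ a b : A, f a ≠ 0 ∧ f a * m = f b) [IsReduced (E ⊗[K] A)] :
    IsReduced (E ⊗[K] M) := by
  let g : E ⊗[K] A →ₐ[K] E ⊗[K] M := Algebra.TensorProduct.map (AlgHom.id K E) f
  have hg : Function.Injective g :=
    Module.Flat.lTensor_preserves_injective_linearMap (M := E) f.toLinearMap hf
  have key : ∀ z : E ⊗[K] M, ∃ a : A, f a ≠ 0 ∧ ∃ w, ((1 : E) ⊗ₜ[K] f a) * z = g w := by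
    intro z
    induction z with
    | zero => exact ⟨1, by simp, 0, by simp⟩
    | tmul e m =>
      obtain ⟨a, b, ha, hb⟩ := hfrac m
      exact ⟨a, ha, e ⊗ₜ b, by simp [g, hb]⟩
    | add x y hx hy =>
      obtain ⟨a, ha, w, hw⟩ := hx
      obtain ⟨b, hb, v, hv⟩ := hy
      refine ⟨a * b, by simp [ha, hb], (1 ⊗ₜ b) * w + (1 ⊗ₜ a) * v, ?_⟩
      have h1 : ((1 : E) ⊗ₜ[K] f (a * b)) = (1 ⊗ₜ f a) * (1 ⊗ₜ f b) := by simp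
      have h2 : g (1 ⊗ₜ a) = 1 ⊗ₜ f a := by simp [g]
      have h3 : g (1 ⊗ₜ b) = 1 ⊗ₜ f b := by simp [g]
      rw [h1, map_add, map_mul g, map_mul g, h2, h3, ← hw, ← hv]
      ring
  constructor
  intro z hz
  obtain ⟨a, ha, w, hw⟩ := key z
  have hn : IsNilpotent (g w) := by
    rw [← hw]
    exact (Commute.all _ _).isNilpotent_mul_left hz
  rw [IsNilpotent.map_iff hg] at hn
  rw [hn.eq_zero, map_zero] at hw
  have hu : IsUnit ((1 : E) ⊗ₜ[K] f a) :=
    (IsUnit.mk0 _ ha).map (Algebra.TensorProduct.includeRight : M →ₐ[K] E ⊗[K] M)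
  exact (hu.mul_right_eq_zero).1 hw

lemma aux_red_adjoin {K L E : Type*} [Field K] [Field L] [Field E] [Algebra K L] [Algebra K E]
    (s : Set L) (hs : AlgebraicIndependent K ((↑) : s → L)) :
    IsReduced (E ⊗[K] (IntermediateField.adjoin K s)) := by
  let f0 : MvPolynomial s K →ₐ[K] L := MvPolynomial.aeval ((↑) : s → L)
  have hmem : ∀ q, f0 q ∈ (IntermediateField.adjoin K s).toSubalgebra := by
    intro q
    have : f0 q ∈ Algebra.adjoin K s := by
      have h := (MvPolynomial.aeval_range (R := K) ((↑) : s → L))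
      rw [Subtype.range_coe] at h
      rw [Algebra.adjoin_eq_range]
      exact ⟨q, rfl⟩
    exact IntermediateField.algebra_adjoin_le_adjoin K s this
  let f : MvPolynomial s K →ₐ[K] IntermediateField.adjoin K s := f0.codRestrict _ hmem
  have hf : Function.Injective f := by
    intro a b hab
    exact hs (congrArg Subtype.val hab)
  have : IsReduced (E ⊗[K] MvPolynomial s K) :=
    isReduced_of_injective (MvPolynomial.algebraTensorAlgEquiv (σ := s) K E)
      (MvPolynomial.algebraTensorAlgEquiv (σ := s) K E).injective
  apply aux_red_loc f hf
  rintro ⟨m, hm⟩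
  obtain ⟨r, t, h⟩ := (IntermediateField.mem_adjoin_iff K m).1 hm
  by_cases h0 : f0 t = 0
  · refine ⟨1, 0, by simp, ?_⟩
    apply Subtype.ext
    have : m = 0 := by rw [h]; exact (congrArg _ h0).trans (div_zero _)
    simp [this]
  · refine ⟨t, r, fun h' => h0 (congrArg Subtype.val h'), ?_⟩
    apply Subtype.ext
    change f0 t * m = f0 r
    rw [h]
    exact mul_div_cancel₀ _ h0

lemma aux_red_sep {M L N : Type*} [Field M] [Field L] [Algebra M L] [Algebra.IsSeparable M L]
    [Algebra.EssFiniteType M L] [CommRing N] [Algebra M N] [Nontrivial N]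
    (hN : ∀ a : N, a ≠ 0 → ∃ b, a * b = 1) :
    IsReduced (N ⊗[M] L) := by
  let : Field N := IsField.toField ⟨⟨0, 1, zero_ne_one⟩, mul_comm, fun {a} => hN a⟩
  have : Algebra.FormallyUnramified M L := Algebra.FormallyUnramified.of_isSeparable M L
  exact Algebra.FormallyUnramified.isReduced_of_field N (N ⊗[M] L)

lemma aux_reduced_tower {K M L E : Type*} [Field K] [Field M] [Field L] [Field E] [Algebra K L]
    [Algebra K M] [Algebra M L] [IsScalarTower K M L] [Algebra K E]
    [IsPurelyInseparable K E] [Algebra.EssFiniteType K L] [Algebra.IsSeparable M L]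
    (hr : IsReduced (E ⊗[K] M)) : IsReduced (L ⊗[K] E) := by
  have hr' : IsReduced (M ⊗[K] E) :=
    isReduced_of_injective (Algebra.TensorProduct.comm K M E)
      (Algebra.TensorProduct.comm K M E).injective
  have hN : ∀ a : M ⊗[K] E, a ≠ 0 → ∃ b, a * b = 1 := by
    intro a ha
    rcases aux_unit_or_nil a with h | h
    · exact h.exists_right_inv
    · exact (ha h.eq_zero).elim
  have : Algebra.EssFiniteType M L := Algebra.EssFiniteType.of_comp K M L
  have h1 := aux_red_sep (M := M) (L := L) (N := M ⊗[K] E) hN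
  have h2 : IsReduced (L ⊗[M] (M ⊗[K] E)) :=
    isReduced_of_injective (Algebra.TensorProduct.comm M L (M ⊗[K] E))
      (Algebra.TensorProduct.comm M L (M ⊗[K] E)).injective
  exact isReduced_of_injective (Algebra.TensorProduct.cancelBaseChange K M M L E).symm
    (Algebra.TensorProduct.cancelBaseChange K M M L E).symm.injective

lemma aux_reduced {K L E : Type*} [Field K] [Field L] [Field E] [Algebra K L] [Algebra K E]
    [IsPurelyInseparable K E] [Algebra.EssFiniteType K L] (hsep : IsSeparablyGenerated K L) :
    IsReduced (L ⊗[K] E) := by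
  obtain ⟨s, hs, hs'⟩ := hsep
  exact aux_reduced_tower (M := IntermediateField.adjoin K s) (aux_red_adjoin (E := E) s hs)

/-- the element `x ⊗ 1 - 1 ⊗ x` of `L ⊗[F] E` -/
noncomputable def auxDelta (F L E : Type*) {K : Type*} [Field F] [Field K] [Field L] [Field E]
    [Algebra F L] [Algebra K L] [Algebra K E] [Algebra F E] (x : K) : L ⊗[F] E :=
  (algebraMap K L x) ⊗ₜ 1 - 1 ⊗ₜ (algebraMap K E x)

section
variable (F K L E : Type*) [Field F] [Field K] [Field L] [Field E]
    [Algebra F K] [Algebra K L] [Algebra F L] [IsScalarTower F K L]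
    [Algebra K E] [Algebra F E] [IsScalarTower F K E]

lemma aux_ker (J : Ideal (L ⊗[F] E)) (hJ : ∀ x : K, auxDelta F L E x ∈ J)
    (hred : IsReduced (L ⊗[K] E)) (z : L ⊗[F] E) (hz : IsNilpotent z) : z ∈ J := by
  let g1 : L →ₐ[K] (L ⊗[F] E) ⧸ J :=
    (Ideal.Quotient.mkₐ K J).comp (Algebra.TensorProduct.includeLeft : L →ₐ[K] L ⊗[F] E)
  let g2 : E →ₐ[K] (L ⊗[F] E) ⧸ J :=
    { (Ideal.Quotient.mk J).comp
        (Algebra.TensorProduct.includeRight : E →ₐ[F] L ⊗[F] E).toRingHom with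
      commutes' := by
        intro r
        change Ideal.Quotient.mk J (1 ⊗ₜ algebraMap K E r) = Ideal.Quotient.mk J (algebraMap K L r ⊗ₜ 1)
        exact (Ideal.Quotient.eq.2 (hJ r)).symm }
  let g : L ⊗[K] E →ₐ[K] (L ⊗[F] E) ⧸ J :=
    Algebra.TensorProduct.lift g1 g2 (fun _ _ => Commute.all _ _)
  let φ : L ⊗[F] E →ₐ[F] L ⊗[K] E :=
    Algebra.TensorProduct.lift (Algebra.TensorProduct.includeLeft : L →ₐ[F] L ⊗[K] E)
      ((Algebra.TensorProduct.includeRight : E →ₐ[K] L ⊗[K] E).restrictScalars F)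
      (fun _ _ => Commute.all _ _)
  have h : ∀ w, g (φ w) = Ideal.Quotient.mk J w := by
    intro w
    induction w with
    | zero => simp
    | add x y hx hy => rw [map_add, map_add, hx, hy, map_add]
    | tmul x y =>
      have : φ (x ⊗ₜ y) = x ⊗ₜ y := by simp [φ]
      rw [this]
      change g1 x * g2 y = _
      change Ideal.Quotient.mk J (x ⊗ₜ 1) * Ideal.Quotient.mk J (1 ⊗ₜ y) = _
      rw [← map_mul]
      simp
  rw [← Ideal.Quotient.eq_zero_iff_mem, ← h, (hz.map φ).eq_zero, map_zero]

lemma auxDelta_mul (x y : K) : auxDelta F L E (x * y) =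
    (algebraMap K L x ⊗ₜ 1) * auxDelta F L E y + (1 ⊗ₜ algebraMap K E y) * auxDelta F L E x := by
  simp only [auxDelta, mul_sub, Algebra.TensorProduct.tmul_mul_tmul, map_mul, mul_one, one_mul]
  rw [mul_comm (algebraMap K E y)]
  abel

lemma auxDelta_inv (x : K) : auxDelta F L E x⁻¹ =
    - (algebraMap K L x⁻¹ ⊗ₜ algebraMap K E x⁻¹) * auxDelta F L E x := by
  by_cases hx : x = 0
  · simp [hx, auxDelta]
  · have h1 : algebraMap K L x ≠ 0 := by simpa using hx
    have h2 : algebraMap K E x ≠ 0 := by simpa using hx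
    simp [auxDelta, mul_sub, h1, h2]
    abel

lemma auxDelta_pow (p : ℕ) [Fact p.Prime] [CharP F p] (n : ℕ) (x : K) :
    auxDelta F L E (x ^ p ^ n) = auxDelta F L E x ^ p ^ n := by
  have : CharP (L ⊗[F] E) p :=
    (RingHom.charP_iff (algebraMap F (L ⊗[F] E)) (algebraMap F (L ⊗[F] E)).injective p).1 ‹_›
  simp [auxDelta, sub_pow_char_pow]

/-- the subfield of elements whose difference lies in the ideal -/
def auxSubfield (J : Ideal (L ⊗[F] E)) : Subfield K where
  carrier := {x | auxDelta F L E x ∈ J}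
  mul_mem' := by
    intro x y hx hy
    change auxDelta F L E (x * y) ∈ J
    rw [auxDelta_mul]
    exact J.add_mem (J.mul_mem_left _ hy) (J.mul_mem_left _ hx)
  one_mem' := by simp [auxDelta]
  zero_mem' := by simp [auxDelta]
  add_mem' := by
    intro x y hx hy
    have : auxDelta F L E (x + y) = auxDelta F L E x + auxDelta F L E y := by
      simp only [auxDelta, map_add, TensorProduct.add_tmul, TensorProduct.tmul_add]; abel
    change auxDelta F L E (x + y) ∈ J
    rw [this]
    exact J.add_mem hx hy
  neg_mem' := by
    intro x hx
    have : auxDelta F L E (-x) = - auxDelta F L E x := by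
      simp only [auxDelta, map_neg, TensorProduct.neg_tmul, TensorProduct.tmul_neg]; abel
    change auxDelta F L E (-x) ∈ J
    rw [this]
    exact J.neg_mem hx
  inv_mem' := by
    intro x hx
    change auxDelta F L E x⁻¹ ∈ J
    rw [auxDelta_inv]
    exact J.mul_mem_left _ hx
end

lemma aux_cotangent (R : Type*) [CommRing R] [IsLocalRing R] (d : R)
    (hd : d ∈ IsLocalRing.maximalIdeal R)
    (h : IsLocalRing.maximalIdeal R ≤ Ideal.span {d} ⊔ IsLocalRing.maximalIdeal R ^ 2) :
    Module.finrank (IsLocalRing.ResidueField R) (IsLocalRing.CotangentSpace R) ≤ 1 := by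
  apply finrank_le_one (IsLocalRing.maximalIdeal R |>.toCotangent ⟨d, hd⟩ : IsLocalRing.CotangentSpace R)
  intro w
  obtain ⟨⟨y, hy⟩, rfl⟩ := (IsLocalRing.maximalIdeal R).toCotangent_surjective w
  obtain ⟨u, hu, v, hv, huv⟩ := Submodule.mem_sup.1 (h hy)
  obtain ⟨r, rfl⟩ := Ideal.mem_span_singleton'.1 hu
  refine ⟨IsLocalRing.residue R r, ?_⟩
  change r • (IsLocalRing.maximalIdeal R).toCotangent ⟨d, hd⟩ = _
  rw [← map_smul, Ideal.toCotangent_eq]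
  change r * d - y ∈ _
  rw [← huv]
  simpa using hv

/-- Let `F` be a field of characteristic `p > 0` with `p`-degree at most `1`,
let `F ⊆ K` be a finite purely inseparable field extension, and let `L` be a field containing
`K` that is finitely generated over `F` and separable over `K`.  Let `E` be a perfect closure
of `K` (a perfect field, purely inseparable over `K`).  Then the local Artin ring `L ⊗_F E`
has embedding dimension at most `1`. -/
theorem edim_le_one_of_pdeg_le_one (F K L E : Type*) [Field F] [Field K] [Field L] [Field E]
    (p : ℕ) [Fact p.Prime] [CharP F p]
    [Algebra F K] [Algebra K L] [Algebra F L] [IsScalarTower F K L]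
    [Algebra K E] [Algebra F E] [IsScalarTower F K E] [ExpChar E p] [PerfectRing E p] [IsPurelyInseparable K E]
    (hpdeg : Module.rank F (Ω[F⁄ℤ]) ≤ 1)
    [FiniteDimensional F K] [IsPurelyInseparable F K]
    (hfg : ∃ s : Finset L, IntermediateField.adjoin F (s : Set L) = ⊤)
    (hsep : IsSeparablyGenerated K L) :
    ∃ h : IsLocalRing (L ⊗[F] E),
      letI : IsLocalRing (L ⊗[F] E) := h
      Module.finrank (IsLocalRing.ResidueField (L ⊗[F] E))
        (IsLocalRing.CotangentSpace (L ⊗[F] E)) ≤ 1 := by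
  have hp : p.Prime := Fact.out
  have : ExpChar F p := ExpChar.prime hp
  have : CharP K p := (RingHom.charP_iff (algebraMap F K) (algebraMap F K).injective p).1 ‹_›
  have : IsPurelyInseparable F E := IsPurelyInseparable.trans F K E
  have hess : Algebra.EssFiniteType F L := IntermediateField.fg_top_iff.1 hfg
  have : Algebra.EssFiniteType K L := Algebra.EssFiniteType.of_comp F K L
  have hred : IsReduced (L ⊗[K] E) := aux_reduced hsep
  have hloc : IsLocalRing (L ⊗[F] E) := by
    apply IsLocalRing.of_nonunits_add
    intro a b ha hb
    have ha' := (aux_unit_or_nil a).resolve_left ha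
    have hb' := (aux_unit_or_nil b).resolve_left hb
    exact ((Commute.all a b).isNilpotent_add ha' hb').not_isUnit
  refine ⟨hloc, ?_⟩
  obtain ⟨a, ha⟩ := aux_gen F K p hpdeg
  have hnil : ∀ z : L ⊗[F] E, z ∈ IsLocalRing.maximalIdeal (L ⊗[F] E) → IsNilpotent z :=
    fun z hz => (aux_unit_or_nil z).resolve_left hz
  have hm : ∀ x : K, auxDelta F L E x ∈ IsLocalRing.maximalIdeal (L ⊗[F] E) := by
    intro x
    obtain ⟨n, y, hy⟩ := IsPurelyInseparable.pow_mem F p x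
    apply IsLocalRing.mem_maximalIdeal _ |>.2
    apply IsNilpotent.not_isUnit
    refine ⟨p ^ n, ?_⟩
    rw [← auxDelta_pow, ← hy, auxDelta, ← IsScalarTower.algebraMap_apply,
      ← IsScalarTower.algebraMap_apply, Algebra.TensorProduct.tmul_one_eq_one_tmul, sub_self]
  apply aux_cotangent _ (auxDelta F L E a) (hm a)
  intro z hz
  have htop := ha (auxSubfield F K L E (Ideal.span {auxDelta F L E a} ⊔
      IsLocalRing.maximalIdeal (L ⊗[F] E) ^ 2)) (by
    intro x
    change auxDelta F L E (x ^ p) ∈ Ideal.span {auxDelta F L E a} ⊔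
      IsLocalRing.maximalIdeal (L ⊗[F] E) ^ 2
    have hpow := auxDelta_pow F K L E p 1 x
    rw [pow_one] at hpow
    rw [hpow]
    exact Ideal.mem_sup_right (Ideal.pow_le_pow_right hp.two_le (Ideal.pow_mem_pow (hm x) p)))
    (Ideal.mem_sup_left (Ideal.mem_span_singleton_self _))
  apply aux_ker F K L E _ _ hred z (hnil z hz)
  intro x
  have : x ∈ auxSubfield F K L E (Ideal.span {auxDelta F L E a} ⊔
      IsLocalRing.maximalIdeal (L ⊗[F] E) ^ 2) := by rw [htop]; trivial
  exact this
end

section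
/- Let B be a complete one-dimensional local Noetherian Gorenstein ring, B ⊆ A a finite ring extension with A a maximal Cohen–Macaulay B-module such that B_s = A_s for some regular element s in the maximal ideal of B (so A/B has finite length). Let 𝔠 = Ann_B(A/B) be the conductor ideal. Then length_B(A/𝔠) = 2·length_B(B/𝔠). -/
noncomputable section

open CategoryTheory

/-- The length of a module, defined as the Krull dimension of its submodule lattice. -/
noncomputable def moduleLength (R M : Type*) [CommRing R] [AddCommGroup M] [Module R M] :
    WithBot ℕ∞ := Order.krullDim (Submodule R M)

/-- A Noetherian local ring `B` is Gorenstein if it has finite injective dimension over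
itself; by Bass' criterion this holds iff `Ext^i(κ, B)` vanishes for all large `i`,
where `κ` is the residue field. -/
def IsGorensteinLocalRing (B : Type*) [CommRing B] [IsLocalRing B] : Prop :=
  IsNoetherianRing B ∧ ∃ n : ℕ, ∀ i : ℕ, n < i →
    Subsingleton (((Ext B (ModuleCat B) i).obj
      (Opposite.op (ModuleCat.of B (IsLocalRing.ResidueField B)))).obj (ModuleCat.of B B))

universe u v

/-- Vanishing of the derived-functor `Ext` implies vanishing of the derived-category `Ext`. -/
lemma cl_bridge {B : Type u} [CommRing B] (X Y : ModuleCat.{u} B) (i : ℕ)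
    (h : Subsingleton (((Ext B (ModuleCat.{u} B) (i + 1)).obj (Opposite.op X)).obj Y)) :
    Subsingleton (Abelian.Ext X Y (i + 1)) := by
  refine subsingleton_of_forall_eq 0 fun α => ?_
  let P := projectiveResolution X
  have h1 : Limits.IsZero ((P.complex.linearYonedaObj B Y).homology (i + 1)) := by
    refine Limits.IsZero.of_iso ?_ (P.isoExt (R := B) (i + 1) Y).symm
    exact ModuleCat.isZero_of_subsingleton _
  rw [← HomologicalComplex.exactAt_iff_isZero_homology,
    HomologicalComplex.exactAt_iff' _ i (i + 1) (i + 2) (by simp) (by simp)] at h1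
  obtain ⟨f, hf, rfl⟩ := P.extMk_surjective α (i + 2) rfl
  rw [P.extMk_eq_zero_iff f _ _ hf i rfl]
  rw [ShortComplex.moduleCat_exact_iff] at h1
  obtain ⟨g, hg⟩ := h1 f hf
  exact ⟨g, hg⟩

lemma cl_shortExact {B : Type u} [CommRing B] {M₁ M₂ M₃ : Type u} [AddCommGroup M₁] [Module B M₁]
    [AddCommGroup M₂] [Module B M₂] [AddCommGroup M₃] [Module B M₃] (f : M₁ →ₗ[B] M₂)
    (g : M₂ →ₗ[B] M₃) (hf : Function.Injective f) (hg : Function.Surjective g)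
    (hfg : Function.Exact f g) :
    (ShortComplex.mk (ModuleCat.ofHom f) (ModuleCat.ofHom g)
      (by ext x; exact hfg.apply_apply_eq_zero x)).ShortExact where
  exact := by
    rw [ShortComplex.moduleCat_exact_iff]
    intro x hx
    exact (hfg x).1 hx
  mono_f := (ModuleCat.mono_iff_injective _).2 hf
  epi_g := (ModuleCat.epi_iff_surjective _).2 hg

/-- `Ext` into the ring. -/
abbrev clE (B : Type u) [CommRing B] (M : Type u) [AddCommGroup M] [Module B M] (i : ℕ) : Type u :=
  Abelian.Ext (ModuleCat.of B M) (ModuleCat.of B B) i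

/-- functoriality of `Ext` in the first variable. -/
def clMap {B : Type u} [CommRing B] {M N : Type u} [AddCommGroup M] [Module B M]
    [AddCommGroup N] [Module B N] (f : M →ₗ[B] N) (i : ℕ) : clE B N i →ₗ[B] clE B M i :=
  Abelian.Ext.bilinearCompOfLinear B _ _ _ 0 i i (zero_add i)
    (Abelian.Ext.mk₀ (ModuleCat.ofHom f))

lemma clMap_apply {B : Type u} [CommRing B] {M N : Type u} [AddCommGroup M] [Module B M]
    [AddCommGroup N] [Module B N] (f : M →ₗ[B] N) (i : ℕ) (x : clE B N i) :
    clMap f i x = (Abelian.Ext.mk₀ (ModuleCat.ofHom f)).comp x (zero_add i) := rfl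

section les
variable {B : Type u} [CommRing B] {M₁ M₂ M₃ : Type u} [AddCommGroup M₁] [Module B M₁]
    [AddCommGroup M₂] [Module B M₂] [AddCommGroup M₃] [Module B M₃] {f : M₁ →ₗ[B] M₂}
    {g : M₂ →ₗ[B] M₃}

lemma clMap_exact (hf : Function.Injective f) (hg : Function.Surjective g)
    (hfg : Function.Exact f g) (i : ℕ) : Function.Exact (clMap g i) (clMap f i) := by
  have hS := cl_shortExact f g hf hg hfg
  intro x
  constructor
  · intro hx
    exact Abelian.Ext.contravariant_sequence_exact₂ hS (ModuleCat.of B B) x hx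
  · rintro ⟨y, rfl⟩
    rw [clMap_apply, clMap_apply, Abelian.Ext.mk₀_comp_mk₀_assoc]
    have : ModuleCat.ofHom f ≫ ModuleCat.ofHom g = 0 := by
      ext x; exact hfg.apply_apply_eq_zero x
    rw [this]; simp

lemma clMap_surj (hf : Function.Injective f) (hg : Function.Surjective g)
    (hfg : Function.Exact f g) (i : ℕ) (h : Subsingleton (clE B M₃ (i + 1))) :
    Function.Surjective (clMap f i) := by
  have hS := cl_shortExact f g hf hg hfg
  intro x
  exact Abelian.Ext.contravariant_sequence_exact₁ hS (ModuleCat.of B B) x (add_comm 1 i)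
    (h.elim _ _)

lemma clMap_inj (hf : Function.Injective f) (hg : Function.Surjective g)
    (hfg : Function.Exact f g) (i : ℕ) (h : Subsingleton (clE B M₁ i)) :
    Function.Injective (clMap g (i + 1)) := by
  have hS := cl_shortExact f g hf hg hfg
  rw [injective_iff_map_eq_zero]
  intro x hx
  obtain ⟨y, hy⟩ := Abelian.Ext.contravariant_sequence_exact₃ hS (ModuleCat.of B B) x hx
    (add_comm 1 i)
  rw [← hy, h.elim y 0]; simp

lemma clE_mid (hf : Function.Injective f) (hg : Function.Surjective g)
    (hfg : Function.Exact f g) (i : ℕ) (h₁ : Subsingleton (clE B M₁ i)) (h₃ : Subsingleton (clE B M₃ i)) :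
    Subsingleton (clE B M₂ i) := by
  refine subsingleton_of_forall_eq 0 fun x => ?_
  obtain ⟨y, rfl⟩ := (clMap_exact hf hg hfg i x).1 (h₁.elim _ _)
  rw [h₃.elim y 0, map_zero]

lemma clE_left (hf : Function.Injective f) (hg : Function.Surjective g)
    (hfg : Function.Exact f g) (i : ℕ) (h₂ : Subsingleton (clE B M₂ i)) (h₃ : Subsingleton (clE B M₃ (i + 1))) :
    Subsingleton (clE B M₁ i) := by
  refine subsingleton_of_forall_eq 0 fun x => ?_
  obtain ⟨y, rfl⟩ := clMap_surj hf hg hfg i h₃ x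
  rw [h₂.elim y 0, map_zero]

lemma clE_right (hf : Function.Injective f) (hg : Function.Surjective g)
    (hfg : Function.Exact f g) (i : ℕ) (h₁ : Subsingleton (clE B M₁ i)) (h₂ : Subsingleton (clE B M₂ (i + 1))) :
    Subsingleton (clE B M₃ (i + 1)) :=
  (clMap_inj hf hg hfg i h₁).subsingleton

end les

lemma clE_congr {B : Type u} [CommRing B] {M N : Type u} [AddCommGroup M] [Module B M]
    [AddCommGroup N] [Module B N] (e : M ≃ₗ[B] N) (i : ℕ) : Nonempty (clE B N i ≃ₗ[B] clE B M i) := by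
  refine ⟨LinearEquiv.ofLinearMap (clMap e.toLinearMap i) (clMap e.symm.toLinearMap i) ?_ ?_⟩ <;>
  · ext x
    simp only [LinearMap.comp_apply, LinearMap.id_apply, clMap_apply]
    rw [Abelian.Ext.mk₀_comp_mk₀_assoc, ← ModuleCat.ofHom_comp]
    simp

section local_part
set_option linter.unusedSectionVars false
variable {B : Type u} [CommRing B] [IsLocalRing B]

lemma cl_simple {M : Type u} [AddCommGroup M] [Module B M] [IsSimpleModule B M] :
    Nonempty (M ≃ₗ[B] IsLocalRing.ResidueField B) := by
  obtain ⟨I, hI, ⟨e⟩⟩ := isSimpleModule_iff_quot_maximal.1 (inferInstance : IsSimpleModule B M)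
  obtain rfl := IsLocalRing.eq_maximalIdeal hI
  exact ⟨e⟩

/-- dévissage for modules of finite length -/
lemma cl_fl_vanish (i : ℕ) (h : Subsingleton (clE B (IsLocalRing.ResidueField B) i))
    (M : Type u) [AddCommGroup M] [Module B M] (hM : IsFiniteLength B M) :
    Subsingleton (clE B M i) := by
  induction hM with
  | of_subsingleton =>
    rename_i M _ _ _
    refine subsingleton_of_forall_eq 0 fun x => ?_
    have h0 : (𝟙 (ModuleCat.of B M)) = 0 := (ModuleCat.isZero_of_subsingleton _).eq_of_src _ _
    rw [← Abelian.Ext.mk₀_id_comp x, h0]; simp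
  | of_simple_quotient hN ih =>
    rename_i M _ _ N hs
    obtain ⟨e⟩ := cl_simple (B := B) (M := M ⧸ N)
    obtain ⟨e'⟩ := clE_congr e i
    exact clE_mid N.injective_subtype N.mkQ_surjective (LinearMap.exact_subtype_mkQ N) i ih
      (e'.symm.toEquiv.subsingleton)

variable [IsNoetherianRing B]

lemma cl_quot_artinian (hdim : ringKrullDim B = 1) (t : B) (ht : t ∈ nonZeroDivisors B) :
    IsArtinianRing (B ⧸ Ideal.span {t}) := by
  have h1 := ringKrullDim_quotient_succ_le_of_nonZeroDivisor ht
  rw [hdim] at h1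
  have h2 : Ring.KrullDimLE 0 (B ⧸ Ideal.span {t}) := by
    rw [Ring.krullDimLE_iff]
    have : ringKrullDim (B ⧸ Ideal.span {t}) + 1 ≤ 0 + 1 := by simpa using h1
    exact (ENat.WithBot.add_le_add_one_right_iff).1 this
  exact isArtinianRing_iff_isNoetherianRing_krullDimLE_zero.2 ⟨inferInstance, h2⟩

lemma cl_quot_fl (hdim : ringKrullDim B = 1) (t : B) (ht : t ∈ nonZeroDivisors B) :
    IsFiniteLength B (B ⧸ Ideal.span {t}) := by
  have := cl_quot_artinian hdim t ht
  rw [isFiniteLength_iff_isNoetherian_isArtinian]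
  refine ⟨inferInstance, ?_⟩
  exact isArtinian_of_surjective_algebraMap (R := B ⧸ Ideal.span {t}) Ideal.Quotient.mk_surjective

lemma cl_mul_exact (t : B) :
    Function.Exact (LinearMap.mulLeft B t) (Ideal.span {t} : Ideal B).mkQ := by
  intro x
  simp only [Submodule.mkQ_apply, Submodule.Quotient.mk_eq_zero, Ideal.mem_span_singleton,
    Set.mem_range, LinearMap.mulLeft_apply]
  exact ⟨fun ⟨y, hy⟩ => ⟨y, hy.symm⟩, fun ⟨y, hy⟩ => ⟨y, hy.symm⟩⟩

lemma cl_mul_inj (t : B) (ht : t ∈ nonZeroDivisors B) :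
    Function.Injective (LinearMap.mulLeft B t) := fun _ _ h =>
  (mul_cancel_left_mem_nonZeroDivisors ht).1 h

lemma cl_quot_ext (t : B) (ht : t ∈ nonZeroDivisors B) (i : ℕ) :
    Subsingleton (clE B (B ⧸ Ideal.span {t}) (i + 2)) := by
  have hp : Projective (ModuleCat.of B B) := inferInstance
  exact clE_right (cl_mul_inj t ht) (Submodule.mkQ_surjective _) (cl_mul_exact t) (i + 1)
    (Abelian.Ext.subsingleton_of_projective _ _ i) (Abelian.Ext.subsingleton_of_projective _ _ _)

/-- a nonzero module of finite length contains a copy of the residue field. -/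
lemma cl_embed (M : Type u) [AddCommGroup M] [Module B M] [Nontrivial M]
    (hM : IsFiniteLength B M) : 
    ∃ f : IsLocalRing.ResidueField B →ₗ[B] M, Function.Injective f := by
  obtain ⟨h1, h2⟩ := isFiniteLength_iff_isNoetherian_isArtinian.1 hM
  obtain ⟨N, hN⟩ := IsAtomic.exists_atom (Submodule B M)
  have : IsSimpleModule B N := isSimpleModule_iff_isAtom.2 hN
  obtain ⟨e⟩ := cl_simple (B := B) (M := N)
  exact ⟨N.subtype ∘ₗ e.symm.toLinearMap, N.injective_subtype.comp e.symm.injective⟩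

lemma cl_ext_two (hdim : ringKrullDim B = 1) (t : B) (ht : t ∈ nonZeroDivisors B)
    (htm : t ∈ IsLocalRing.maximalIdeal B) (n : ℕ)
    (hn : ∀ i, n < i → Subsingleton (clE B (IsLocalRing.ResidueField B) i)) (i : ℕ) :
    Subsingleton (clE B (IsLocalRing.ResidueField B) (i + 2)) := by
  have hX := cl_quot_fl hdim t ht
  obtain ⟨_, hXa⟩ := isFiniteLength_iff_isNoetherian_isArtinian.1 hX
  have : Nontrivial (B ⧸ Ideal.span {t}) := Ideal.Quotient.nontrivial_iff.2 (by
    intro h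
    exact (IsLocalRing.maximalIdeal.isMaximal B).ne_top
      (top_le_iff.1 (h ▸ (Ideal.span_singleton_le_iff_mem _).2 htm)))
  obtain ⟨f, hf⟩ := cl_embed (B ⧸ Ideal.span {t}) hX
  have key : ∀ i, Subsingleton (clE B (IsLocalRing.ResidueField B) (i + 3)) →
      Subsingleton (clE B (IsLocalRing.ResidueField B) (i + 2)) := by
    intro i hi
    refine clE_left hf (Submodule.mkQ_surjective (LinearMap.range f))
      (LinearMap.exact_map_mkQ_range f) (i + 2) (cl_quot_ext t ht i) (cl_fl_vanish _ hi _ ?_)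
    rw [isFiniteLength_iff_isNoetherian_isArtinian]
    exact ⟨inferInstance, inferInstance⟩
  have key2 : ∀ d i, n < i + 2 + d → Subsingleton (clE B (IsLocalRing.ResidueField B) (i + 2)) := by
    intro d
    induction d with
    | zero => intro i hi; exact hn _ hi
    | succ d ih => intro i hi; exact key i (ih (i + 1) (by omega))
  exact key2 n i (by omega)

lemma cl_hom_zero (t : B) (ht : t ∈ nonZeroDivisors B) (htm : t ∈ IsLocalRing.maximalIdeal B) :
    Subsingleton (clE B (IsLocalRing.ResidueField B) 0) := by
  rw [Abelian.Ext.homEquiv₀.subsingleton_congr]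
  refine subsingleton_of_forall_eq 0 fun f => ?_
  ext x
  have h1 : t • x = 0 := by
    rw [Algebra.smul_def]
    rw [show algebraMap B (IsLocalRing.ResidueField B) t = 0 from
      (IsLocalRing.residue_eq_zero_iff t).2 htm, zero_mul]
  have h2 : t * f.hom x = 0 := by
    rw [← smul_eq_mul, ← map_smul, h1, map_zero]
  exact (mul_left_mem_nonZeroDivisors_eq_zero_iff ht).1 h2

lemma cl_length_ext (h0 : Subsingleton (clE B (IsLocalRing.ResidueField B) 0))
    (h2 : Subsingleton (clE B (IsLocalRing.ResidueField B) 2))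
    (M : Type u) [AddCommGroup M] [Module B M] (hM : IsFiniteLength B M) :
    Module.length B (clE B M 1) =
      Module.length B M * Module.length B (clE B (IsLocalRing.ResidueField B) 1) := by
  induction hM with
  | of_subsingleton =>
    rename_i M _ _ _
    have : Subsingleton (clE B M 1) := by
      refine subsingleton_of_forall_eq 0 fun x => ?_
      have h0 : (𝟙 (ModuleCat.of B M)) = 0 := (ModuleCat.isZero_of_subsingleton _).eq_of_src _ _
      rw [← Abelian.Ext.mk₀_id_comp x, h0]; simp
    simp [Module.length_eq_zero]
  | of_simple_quotient hN ih =>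
    rename_i M _ _ N hs
    obtain ⟨e⟩ := cl_simple (B := B) (M := M ⧸ N)
    obtain ⟨e'⟩ := clE_congr e 1
    obtain ⟨e''⟩ := clE_congr e 2
    have a1 := clMap_exact N.injective_subtype N.mkQ_surjective (LinearMap.exact_subtype_mkQ N) 1
    have a2 := clMap_inj N.injective_subtype N.mkQ_surjective (LinearMap.exact_subtype_mkQ N) 0
      (cl_fl_vanish 0 h0 N hN)
    have a3 := clMap_surj N.injective_subtype N.mkQ_surjective (LinearMap.exact_subtype_mkQ N) 1
      (e''.symm.toEquiv.subsingleton)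
    rw [Module.length_eq_add_of_exact _ _ a2 a3 a1, ih, ← e'.length_eq,
      Module.length_eq_add_of_exact _ _ N.injective_subtype N.mkQ_surjective
        (LinearMap.exact_subtype_mkQ N), Module.length_eq_one B (M ⧸ N)]
    ring

lemma cl_length_quot_ext (t : B) (ht : t ∈ nonZeroDivisors B) :
    Module.length B (clE B (B ⧸ Ideal.span {t}) 1) ≤ Module.length B (B ⧸ Ideal.span {t}) := by
  have hS := cl_shortExact _ _ (cl_mul_inj t ht) (Submodule.mkQ_surjective _) (cl_mul_exact t)
  have hgen : ∀ x : clE B (B ⧸ Ideal.span {t}) 1, ∃ b : B, b • hS.extClass = x := by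
    intro x
    have hp : Projective (ModuleCat.of B B) := inferInstance
    obtain ⟨y, hy⟩ := Abelian.Ext.contravariant_sequence_exact₃ hS (ModuleCat.of B B) x
      (Abelian.Ext.eq_zero_of_projective (P := ModuleCat.of B B) (n := 0) _) (n₀ := 0) rfl
    obtain ⟨f, rfl⟩ := Abelian.Ext.homEquiv₀.symm.surjective y
    refine ⟨f.hom (1 : B), ?_⟩
    rw [← hy, Abelian.Ext.homEquiv₀_symm_apply, Abelian.Ext.smul_eq_comp_mk₀]
    congr 2
    ext
    change f.hom (1 : B) • (1 : B) = f.hom (1 : B)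
    simp
  have hkill : t • (hS.extClass : clE B (B ⧸ Ideal.span {t}) 1) = 0 := by
    have : t • 𝟙 (ModuleCat.of B (B ⧸ Ideal.span {t})) = 0 := by
      refine ModuleCat.hom_ext (LinearMap.ext fun x => ?_)
      obtain ⟨b, rfl⟩ := Ideal.Quotient.mk_surjective x
      change t • (Ideal.Quotient.mk _ b) = 0
      rw [Algebra.smul_def, Ideal.Quotient.algebraMap_eq, ← map_mul, Ideal.Quotient.eq_zero_iff_mem]
      exact Ideal.mem_span_singleton.2 ⟨b, rfl⟩
    rw [← Abelian.Ext.mk₀_id_comp (hS.extClass), ← Abelian.Ext.smul_comp, ← Abelian.Ext.mk₀_smul]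
    erw [this]
    simp
  refine Module.length_le_of_surjective ((Ideal.span {t}).liftQ
    (LinearMap.toSpanSingleton B (clE B (B ⧸ Ideal.span {t}) 1) hS.extClass) ?_) ?_
  · rw [Ideal.span_le, Set.singleton_subset_iff]
    exact hkill
  · intro x
    obtain ⟨b, hb⟩ := hgen x
    exact ⟨Submodule.Quotient.mk b, hb⟩

end local_part

section local_part2
set_option linter.unusedSectionVars false
variable {B : Type u} [CommRing B] [IsLocalRing B]

lemma cl_length_le_add {M N P : Type*} [AddCommGroup M] [Module B M] [AddCommGroup N] [Module B N]
    [AddCommGroup P] [Module B P] (f : N →ₗ[B] M) (g : M →ₗ[B] P)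
    (h : ∀ x, g x = 0 → ∃ y, f y = x) :
    Module.length B M ≤ Module.length B N + Module.length B P := by
  rw [Module.length_eq_add_of_exact (LinearMap.ker g).subtype g.rangeRestrict
    (LinearMap.ker g).injective_subtype g.surjective_rangeRestrict (by
      intro x
      simp [Subtype.ext_iff])]
  refine add_le_add ?_ (Module.length_le_of_injective _ (LinearMap.range g).injective_subtype)
  have hle : LinearMap.ker g ≤ LinearMap.range f := fun x hx => h x hx
  exact (Module.length_le_of_injective _ (Submodule.inclusion_injective hle)).trans
    (Module.length_le_of_surjective f.rangeRestrict f.surjective_rangeRestrict)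

lemma cl_hom_fl (X : Type u) [AddCommGroup X] [Module B X]
    (hX : Module.length B (IsLocalRing.ResidueField B →ₗ[B] X) ≤ 1)
    (M : Type u) [AddCommGroup M] [Module B M] (hM : IsFiniteLength B M) :
    Module.length B (M →ₗ[B] X) ≤ Module.length B M := by
  induction hM with
  | of_subsingleton => simp [Module.length_eq_zero]
  | of_simple_quotient hN ih =>
    rename_i M _ _ N hs
    obtain ⟨e⟩ := cl_simple (B := B) (M := M ⧸ N)
    have h1 := cl_length_le_add (LinearMap.lcomp B X N.mkQ) (LinearMap.lcomp B X N.subtype) (by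
      intro f hf
      refine ⟨N.liftQ f ?_, ?_⟩
      · intro x hx
        exact LinearMap.congr_fun hf ⟨x, hx⟩
      · ext x; rfl)
    rw [Module.length_eq_add_of_exact _ _ N.injective_subtype N.mkQ_surjective
        (LinearMap.exact_subtype_mkQ N), Module.length_eq_one B (M ⧸ N)]
    refine h1.trans ?_
    rw [add_comm]
    refine add_le_add ih ?_
    rw [LinearEquiv.length_eq (LinearEquiv.congrLeft X B e)]
    exact hX

lemma cl_ann (X : Type u) [CommRing X] [Algebra B X] (hfl : IsFiniteLength B X)
    (hX : Module.length B (IsLocalRing.ResidueField B →ₗ[B] X) ≤ 1)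
    (J K : Submodule B X) (hK : ∀ x, x ∈ K ↔ ∀ j ∈ J, x * j = 0) :
    Module.length B (X ⧸ K) = Module.length B J := by
  obtain ⟨_, _⟩ := isFiniteLength_iff_isNoetherian_isArtinian.1 hfl
  have flJ : IsFiniteLength B J := isFiniteLength_iff_isNoetherian_isArtinian.2
    ⟨inferInstance, inferInstance⟩
  have flQ : IsFiniteLength B (X ⧸ J) := isFiniteLength_iff_isNoetherian_isArtinian.2
    ⟨inferInstance, inferInstance⟩
  have e1 := Module.length_eq_add_of_exact _ _ K.injective_subtype K.mkQ_surjective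
        (LinearMap.exact_subtype_mkQ K)
  have e2 := Module.length_eq_add_of_exact _ _ J.injective_subtype J.mkQ_surjective
        (LinearMap.exact_subtype_mkQ J)
  have i1 : Module.length B (X ⧸ K) ≤ Module.length B J := by
    refine le_trans ?_ (cl_hom_fl X hX J flJ)
    let φ : X →ₗ[B] (J →ₗ[B] X) := (LinearMap.lcomp B X J.subtype) ∘ₗ LinearMap.mul B X
    have hker : LinearMap.ker φ = K := by
      ext x
      rw [hK, LinearMap.mem_ker, LinearMap.ext_iff]
      exact ⟨fun h j hj => h ⟨j, hj⟩, fun h j => h j j.2⟩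
    refine Module.length_le_of_injective (K.liftQ φ hker.ge) ?_
    rw [← LinearMap.ker_eq_bot, Submodule.ker_liftQ, hker, Submodule.mkQ_map_self]
  have i2 : Module.length B K ≤ Module.length B (X ⧸ J) := by
    refine le_trans ?_ (cl_hom_fl X hX (X ⧸ J) flQ)
    let φ : K →ₗ[B] (X ⧸ J →ₗ[B] X) :=
      { toFun := fun x => J.liftQ (LinearMap.mul B X x) (fun j hj => (hK _).1 x.2 j hj)
        map_add' := fun x y => by ext z; exact add_mul (x : X) (y : X) z
        map_smul' := fun b x => by ext z; exact smul_mul_assoc b (x : X) z }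
    refine Module.length_le_of_injective φ ?_
    rw [injective_iff_map_eq_zero]
    intro x hx
    have := LinearMap.congr_fun hx (Submodule.Quotient.mk 1)
    ext
    exact (mul_one (x : X)).symm.trans this
  have n1 : Module.length B (X ⧸ K) ≠ ⊤ := Module.length_ne_top
  have n2 : Module.length B K ≠ ⊤ := Module.length_ne_top
  have n3 : Module.length B (X ⧸ J) ≠ ⊤ := Module.length_ne_top
  have n4 : Module.length B J ≠ ⊤ := Module.length_ne_top
  rw [e1] at e2
  lift Module.length B (X ⧸ K) to ℕ using n1 with a
  lift Module.length B K to ℕ using n2 with b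
  lift Module.length B (X ⧸ J) to ℕ using n3 with c
  lift Module.length B J to ℕ using n4 with d
  norm_cast at *
  omega

variable [IsNoetherianRing B]

lemma cl_socle (hdim : ringKrullDim B = 1) (hGor : IsGorensteinLocalRing B)
    (t : B) (ht : t ∈ nonZeroDivisors B) (htm : t ∈ IsLocalRing.maximalIdeal B) :
    Module.length B (IsLocalRing.ResidueField B →ₗ[B] (B ⧸ Ideal.span {t})) ≤ 1 := by
  obtain ⟨_, n, hn⟩ := hGor
  have hn' : ∀ i, n < i → Subsingleton (clE B (IsLocalRing.ResidueField B) i) := by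
    intro i hi
    obtain ⟨j, rfl⟩ : ∃ j, i = j + 1 := ⟨i - 1, by omega⟩
    exact cl_bridge _ _ j (hn _ hi)
  have h2 := cl_ext_two hdim t ht htm n hn' 0
  have h0 := cl_hom_zero t ht htm
  have hX := cl_quot_fl hdim t ht
  have hlen := cl_length_ext h0 h2 _ hX
  have hle := cl_length_quot_ext t ht
  rw [hlen] at hle
  have hnt : Nontrivial (B ⧸ Ideal.span {t}) := Ideal.Quotient.nontrivial_iff.2 (by
    intro h
    exact (IsLocalRing.maximalIdeal.isMaximal B).ne_top
      (top_le_iff.1 (h ▸ (Ideal.span_singleton_le_iff_mem _).2 htm)))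
  have hpos : 0 < Module.length B (B ⧸ Ideal.span {t}) := Module.length_pos
  have hfin : Module.length B (B ⧸ Ideal.span {t}) ≠ ⊤ := Module.length_ne_top_iff.2 hX
  have hc : Module.length B (clE B (IsLocalRing.ResidueField B) 1) ≤ 1 := by
    generalize Module.length B (clE B (IsLocalRing.ResidueField B) 1) = c at hle
    lift Module.length B (B ⧸ Ideal.span {t}) to ℕ using hfin with l
    induction c using ENat.recTopCoe with
    | top =>
      rw [ENat.mul_top hpos.ne'] at hle
      simp at hle
    | coe c =>
      norm_cast at *
      by_contra hcon
      nlinarith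
  refine le_trans ?_ hc
  have hS := cl_shortExact _ _ (cl_mul_inj t ht) (Submodule.mkQ_surjective _) (cl_mul_exact t)
  let K := ModuleCat.of B (IsLocalRing.ResidueField B)
  let φ : (IsLocalRing.ResidueField B →ₗ[B] (B ⧸ Ideal.span {t})) →ₗ[B]
      clE B (IsLocalRing.ResidueField B) 1 :=
    { toFun := fun f => (Abelian.Ext.mk₀ (X := K) (ModuleCat.ofHom f)).comp hS.extClass (zero_add 1)
      map_add' := fun f g => by
        rw [ModuleCat.ofHom_add, Abelian.Ext.mk₀_add, Abelian.Ext.add_comp]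
      map_smul' := fun b f => by
        rw [show ModuleCat.ofHom (b • f) = b • ModuleCat.ofHom f from rfl, Abelian.Ext.mk₀_smul, Abelian.Ext.smul_comp]; rfl }
  refine Module.length_le_of_injective φ ?_
  rw [injective_iff_map_eq_zero]
  intro f hf
  obtain ⟨y, hy⟩ := Abelian.Ext.covariant_sequence_exact₃ K hS
    (Abelian.Ext.mk₀ (X := K) (ModuleCat.ofHom f)) (zero_add 1) hf
  have hy0 : y = 0 := h0.elim _ _
  rw [hy0, Abelian.Ext.zero_comp] at hy
  have h3 : ModuleCat.ofHom f = 0 := (Abelian.Ext.mk₀_eq_zero_iff _).1 hy.symm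
  exact congrArg ModuleCat.Hom.hom h3

end local_part2

lemma cl_exists_pow {B : Type u} {A : Type v} [CommRing B] [CommRing A] [Algebra B A]
    [Module.Finite B A] (s : B)
    (hloc : ∀ a : A, ∃ (n : ℕ) (b : B), (algebraMap B A s) ^ n * a = algebraMap B A b) :
    ∃ N : ℕ, ∀ a : A, ∃ b : B, algebraMap B A (s ^ (N + 1)) * a = algebraMap B A b := by
  obtain ⟨T, hT⟩ := (Module.Finite.fg_top : (⊤ : Submodule B A).FG)
  choose n b hb using hloc
  refine ⟨T.sup n, fun a => ?_⟩
  have ha : a ∈ Submodule.span B (T : Set A) := hT ▸ Submodule.mem_top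
  induction ha using Submodule.span_induction with
  | mem x hx =>
    have hle : n x ≤ T.sup n := Finset.le_sup hx
    refine ⟨s ^ (T.sup n + 1 - n x) * b x, ?_⟩
    rw [map_mul, ← hb x, ← mul_assoc, map_pow, map_pow, ← pow_add]
    congr 2
    omega
  | zero => exact ⟨0, by simp⟩
  | add x y _ _ hx hy =>
    obtain ⟨c, hc⟩ := hx
    obtain ⟨d, hd⟩ := hy
    exact ⟨c + d, by rw [mul_add, hc, hd, map_add]⟩
  | smul r x _ hx =>
    obtain ⟨c, hc⟩ := hx
    exact ⟨r * c, by rw [mul_smul_comm, hc, Algebra.smul_def, map_mul]⟩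

lemma cl_mem_conductor {B : Type u} {A : Type v} [CommRing B] [CommRing A] [Algebra B A] (b : B) :
    b ∈ Module.annihilator B (A ⧸ LinearMap.range (Algebra.linearMap B A)) ↔
      ∀ a : A, ∃ c : B, algebraMap B A c = algebraMap B A b * a := by
  rw [Module.mem_annihilator]
  constructor
  · intro h a
    have := h (Submodule.Quotient.mk a)
    rw [← Submodule.Quotient.mk_smul, Submodule.Quotient.mk_eq_zero, Algebra.smul_def] at this
    exact this
  · intro h m
    obtain ⟨a, rfl⟩ := Submodule.Quotient.mk_surjective _ m
    rw [← Submodule.Quotient.mk_smul, Submodule.Quotient.mk_eq_zero, Algebra.smul_def]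
    exact h a

lemma cl_main {B : Type u} {A : Type v} [CommRing B] [IsLocalRing B]
    [IsNoetherianRing B]
    (hdim : ringKrullDim B = 1) (hGor : IsGorensteinLocalRing B)
    [CommRing A] [Algebra B A] (hinj : Function.Injective (algebraMap B A))
    [Module.Finite B A]
    (s : B) (hs : s ∈ IsLocalRing.maximalIdeal B) (hreg : s ∈ nonZeroDivisors B)
    (hregA : algebraMap B A s ∈ nonZeroDivisors A)
    (hloc : ∀ a : A, ∃ (n : ℕ) (b : B), (algebraMap B A s) ^ n * a = algebraMap B A b) :
    Module.length B (B ⧸ Module.annihilator B (A ⧸ LinearMap.range (Algebra.linearMap B A))) =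
      Module.length B (A ⧸ LinearMap.range (Algebra.linearMap B A)) ∧
    Module.length B (A ⧸ LinearMap.range (Algebra.linearMap B A)) ≠ ⊤ := by
  obtain ⟨N, hN⟩ := cl_exists_pow s hloc
  have ht : s ^ (N + 1) ∈ nonZeroDivisors B := pow_mem hreg _
  have htm : s ^ (N + 1) ∈ IsLocalRing.maximalIdeal B :=
    Ideal.pow_mem_of_mem _ hs _ (Nat.succ_pos _)
  have htA : algebraMap B A (s ^ (N + 1)) ∈ nonZeroDivisors A := by
    rw [map_pow]; exact pow_mem hregA _
  generalize s ^ (N + 1) = t at *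
  choose β hβ using hN
  have hX := cl_quot_fl hdim t ht
  have hsoc := cl_socle hdim hGor t ht htm
  let ψ : A →ₗ[B] B :=
    { toFun := β
      map_add' := fun x y => hinj (by rw [← hβ, map_add, ← hβ, ← hβ, mul_add])
      map_smul' := fun b x => hinj (by
        rw [← hβ, RingHom.id_apply, smul_eq_mul, map_mul, ← hβ, Algebra.smul_def]; ring) }
  have hψ : ∀ a, algebraMap B A (ψ a) = algebraMap B A t * a := fun a => (hβ a).symm
  let φ : A →ₗ[B] (B ⧸ Ideal.span {t}) := (Ideal.span {t} : Ideal B).mkQ ∘ₗ ψ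
  have hmem : ∀ a, ψ a ∈ Ideal.span {t} ↔ ∃ c, algebraMap B A c = a := by
    intro a
    rw [Ideal.mem_span_singleton]
    constructor
    · rintro ⟨c, hc⟩
      refine ⟨c, ?_⟩
      have := hψ a
      rw [hc, map_mul] at this
      exact (mul_cancel_left_mem_nonZeroDivisors htA).1 this
    · rintro ⟨c, rfl⟩
      exact ⟨c, hinj (by rw [hψ, map_mul])⟩
  have hker : LinearMap.ker φ = LinearMap.range (Algebra.linearMap B A) := by
    ext a
    rw [LinearMap.mem_ker]
    change (Submodule.Quotient.mk (ψ a) : B ⧸ Ideal.span {t}) = 0 ↔ _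
    rw [Submodule.Quotient.mk_eq_zero, hmem]
    rfl
  have e1 : (A ⧸ LinearMap.range (Algebra.linearMap B A)) ≃ₗ[B] LinearMap.range φ :=
    (Submodule.quotEquivOfEq _ _ hker.symm).trans φ.quotKerEquivRange
  set C := Module.annihilator B (A ⧸ LinearMap.range (Algebra.linearMap B A)) with hC
  have htC : Ideal.span {t} ≤ C := by
    rw [Ideal.span_singleton_le_iff_mem, hC, cl_mem_conductor]
    exact fun a => ⟨ψ a, hψ a⟩
  let K : Submodule B (B ⧸ Ideal.span {t}) := Submodule.map (Ideal.span {t} : Ideal B).mkQ C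
  have hcomap : ∀ b : B, (Ideal.Quotient.mk (Ideal.span {t}) b) ∈ K ↔ b ∈ C := by
    intro b
    constructor
    · rintro ⟨c, hc, hcb⟩
      have : c - b ∈ Ideal.span {t} := (Submodule.Quotient.eq _).1 hcb
      have := C.sub_mem hc (htC this)
      simpa using this
    · intro hb
      exact ⟨b, hb, rfl⟩
  have hK : ∀ x, x ∈ K ↔ ∀ j ∈ LinearMap.range φ, x * j = 0 := by
    intro x
    obtain ⟨b, rfl⟩ := Ideal.Quotient.mk_surjective x
    rw [hcomap, hC, cl_mem_conductor]
    have key : ∀ a : A, Ideal.Quotient.mk (Ideal.span {t}) b * φ a = 0 ↔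
        ∃ c : B, algebraMap B A c = algebraMap B A b * a := by
      intro a
      change Ideal.Quotient.mk (Ideal.span {t}) b * Ideal.Quotient.mk (Ideal.span {t}) (ψ a) = 0 ↔ _
      rw [← map_mul, Ideal.Quotient.eq_zero_iff_mem, ← smul_eq_mul, ← map_smul, hmem,
        Algebra.smul_def]
    constructor
    · rintro h _ ⟨a, rfl⟩
      exact (key a).2 (h a)
    · intro h a
      exact (key a).1 (h _ ⟨a, rfl⟩)
  have main := cl_ann _ hX hsoc (LinearMap.range φ) K hK
  have e2 : ((B ⧸ Ideal.span {t}) ⧸ K) ≃ₗ[B] (B ⧸ C) :=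
    Submodule.quotientQuotientEquivQuotient (Ideal.span {t}) C htC
  obtain ⟨_, _⟩ := isFiniteLength_iff_isNoetherian_isArtinian.1 hX
  rw [e1.length_eq, ← e2.length_eq]
  exact ⟨main, Module.length_ne_top⟩

lemma cl_add {B : Type u} {A : Type v} [CommRing B] 
    [CommRing A] [Algebra B A] (hinj : Function.Injective (algebraMap B A)) :
    Module.length B (A ⧸ ((Module.annihilator B
        (A ⧸ LinearMap.range (Algebra.linearMap B A))) • (⊤ : Submodule B A))) =
    Module.length B (B ⧸ Module.annihilator B (A ⧸ LinearMap.range (Algebra.linearMap B A))) +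
      Module.length B (A ⧸ LinearMap.range (Algebra.linearMap B A)) := by
  set C := Module.annihilator B (A ⧸ LinearMap.range (Algebra.linearMap B A)) with hC
  have hCA : C • (⊤ : Submodule B A) = Submodule.map (Algebra.linearMap B A) C := by
    apply le_antisymm
    · rw [Submodule.smul_le]
      intro b hb a _
      have hb' := (cl_mem_conductor b).1 hb
      obtain ⟨c, hc⟩ := hb' a
      refine ⟨c, (cl_mem_conductor c).2 fun a' => ?_, ?_⟩
      · obtain ⟨d, hd⟩ := hb' (a * a')
        exact ⟨d, by rw [hd, hc, mul_assoc]⟩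
      · rw [Algebra.smul_def]; exact hc
    · rintro _ ⟨c, hc, rfl⟩
      have := Submodule.smul_mem_smul hc (Submodule.mem_top : (1 : A) ∈ (⊤ : Submodule B A))
      rwa [show c • (1 : A) = Algebra.linearMap B A c from
        (Algebra.algebraMap_eq_smul_one c).symm] at this
  rw [hCA]
  have hle : Submodule.map (Algebra.linearMap B A) C ≤ LinearMap.range (Algebra.linearMap B A) :=
    LinearMap.map_le_range
  refine Module.length_eq_add_of_exact
    (Submodule.mapQ C _ (Algebra.linearMap B A) (Submodule.le_comap_map _ _))
    (Submodule.factor hle) ?_ (Submodule.factor_surjective hle) ?_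
  · rw [injective_iff_map_eq_zero]
    intro x hx
    obtain ⟨b, rfl⟩ := Submodule.Quotient.mk_surjective _ x
    rw [Submodule.mapQ_apply, Submodule.Quotient.mk_eq_zero] at hx
    obtain ⟨c, hc, hcb⟩ := hx
    rw [Submodule.Quotient.mk_eq_zero]
    rwa [← hinj hcb]
  · intro x
    obtain ⟨a, rfl⟩ := Submodule.Quotient.mk_surjective _ x
    change (Submodule.Quotient.mk a : A ⧸ LinearMap.range (Algebra.linearMap B A)) = 0 ↔ _
    rw [Submodule.Quotient.mk_eq_zero]
    constructor
    · rintro ⟨b, rfl⟩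
      exact ⟨Submodule.Quotient.mk b, rfl⟩
    · rintro ⟨y, hy⟩
      obtain ⟨b, rfl⟩ := Submodule.Quotient.mk_surjective _ y
      rw [Submodule.mapQ_apply, Submodule.Quotient.eq] at hy
      have h2 := (LinearMap.range (Algebra.linearMap B A)).sub_mem ⟨b, rfl⟩ (hle hy)
      simpa using h2

/-- Let `B` be a complete one-dimensional local Noetherian Gorenstein ring,
`B ⊆ A` a finite ring extension with `A` a maximal Cohen–Macaulay `B`-module (the regular
parameter `s ∈ m_B` acts injectively on `A`) such that `B_s = A_s` for some regular element
`s` in the maximal ideal of `B` (so `A/B` has finite length).  Let `𝔠 = Ann_B(A/B)` be the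
conductor ideal.  Then `length_B(A/𝔠A) = 2·length_B(B/𝔠)`. -/
theorem conductor_length_formula (B A : Type*) [CommRing B] [IsLocalRing B]
    [IsNoetherianRing B] [IsAdicComplete (IsLocalRing.maximalIdeal B) B]
    (hdim : ringKrullDim B = 1) (hGor : IsGorensteinLocalRing B)
    [CommRing A] [Algebra B A] (hinj : Function.Injective (algebraMap B A))
    [Module.Finite B A]
    (s : B) (hs : s ∈ IsLocalRing.maximalIdeal B) (hreg : s ∈ nonZeroDivisors B)
    (hregA : algebraMap B A s ∈ nonZeroDivisors A)
    (hloc : ∀ a : A, ∃ (n : ℕ) (b : B), (algebraMap B A s) ^ n * a = algebraMap B A b) :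
    ∃ n : ℕ,
      moduleLength B (B ⧸ Module.annihilator B
        (A ⧸ LinearMap.range (Algebra.linearMap B A))) = (n : ℕ∞) ∧
      moduleLength B (A ⧸ ((Module.annihilator B
        (A ⧸ LinearMap.range (Algebra.linearMap B A))) • (⊤ : Submodule B A))) =
        ((2 * n : ℕ) : ℕ∞) := by
  obtain ⟨h1, h2⟩ := cl_main hdim hGor hinj s hs hreg hregA hloc
  have h3 := cl_add (B := B) (A := A) hinj
  rw [h1] at h3
  unfold moduleLength
  rw [← Module.coe_length, ← Module.coe_length, h1, h3]
  lift Module.length B (A ⧸ LinearMap.range (Algebra.linearMap B A)) to ℕ using h2 with n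
  exact ⟨n, rfl, by rw [two_mul]; rfl⟩
end
end

section
/- Let B be a one-dimensional complete local Gorenstein ring with fraction-field-like localization, and let 𝔠 ⊆ B be the conductor of a finite birational extension B ⊆ A with A maximal Cohen–Macaulay. Then the natural map A → Hom_B(𝔠, B), a ↦ (x ↦ ax), is an isomorphism of B-modules. -/
noncomputable section

open CategoryTheory

/-- The conductor ideal `𝔠 = Ann_B(A/B)` of a ring extension `B ⊆ A`. -/
def conductorIdeal (B A : Type*) [CommRing B] [CommRing A] [Algebra B A] : Ideal B :=
  Module.annihilator B (A ⧸ LinearMap.range (Algebra.linearMap B A))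

universe u

section CondHelpers

variable {B : Type u} [CommRing B]

/-- Short complex attached to an exact pair of linear maps. -/
abbrev sesOf {N₁ N₂ N₃ : Type u} [AddCommGroup N₁] [Module B N₁] [AddCommGroup N₂] [Module B N₂]
    [AddCommGroup N₃] [Module B N₃] (f : N₁ →ₗ[B] N₂) (g : N₂ →ₗ[B] N₃)
    (h : Function.Exact f g) : ShortComplex (ModuleCat.{u} B) :=
  ShortComplex.mk (ModuleCat.ofHom f) (ModuleCat.ofHom g) (by
    ext x; exact h.apply_apply_eq_zero x)

theorem sesOf_shortExact {N₁ N₂ N₃ : Type u} [AddCommGroup N₁] [Module B N₁] [AddCommGroup N₂]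
    [Module B N₂] [AddCommGroup N₃] [Module B N₃] (f : N₁ →ₗ[B] N₂) (g : N₂ →ₗ[B] N₃)
    (h : Function.Exact f g) (hf : Function.Injective f) (hg : Function.Surjective g) :
    (sesOf f g h).ShortExact where
  exact := (ShortComplex.ShortExact.moduleCat_exact_iff_function_exact _).mpr h
  mono_f := (ModuleCat.mono_iff_injective _).mpr hf
  epi_g := (ModuleCat.epi_iff_surjective _).mpr hg

/-- Vanishing of `Ext^i(N, B)`. -/
def EV (B : Type u) [CommRing B] (i : ℕ) (N : Type u) [AddCommGroup N] [Module B N] : Prop :=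
  ∀ x : Abelian.Ext (ModuleCat.of B N) (ModuleCat.of B B) i, x = 0

theorem EV.mid {N₁ N₂ N₃ : Type u} [AddCommGroup N₁] [Module B N₁] [AddCommGroup N₂]
    [Module B N₂] [AddCommGroup N₃] [Module B N₃] (f : N₁ →ₗ[B] N₂) (g : N₂ →ₗ[B] N₃)
    (h : Function.Exact f g) (hf : Function.Injective f) (hg : Function.Surjective g) {i : ℕ}
    (h1 : EV B i N₁) (h3 : EV B i N₃) : EV B i N₂ := by
  intro x
  obtain ⟨y, hy⟩ := Abelian.Ext.contravariant_sequence_exact₂ (sesOf_shortExact f g h hf hg)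
    (ModuleCat.of B B) x (h1 _)
  rw [← hy, h3 y, Abelian.Ext.comp_zero]

theorem EV.left {N₁ N₂ N₃ : Type u} [AddCommGroup N₁] [Module B N₁] [AddCommGroup N₂]
    [Module B N₂] [AddCommGroup N₃] [Module B N₃] (f : N₁ →ₗ[B] N₂) (g : N₂ →ₗ[B] N₃)
    (h : Function.Exact f g) (hf : Function.Injective f) (hg : Function.Surjective g) {i : ℕ}
    (h2 : EV B i N₂) (h3 : EV B (i + 1) N₃) : EV B i N₁ := by
  intro x
  obtain ⟨y, hy⟩ := Abelian.Ext.contravariant_sequence_exact₁ (sesOf_shortExact f g h hf hg)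
    (ModuleCat.of B B) x (add_comm 1 i) (h3 _)
  rw [← hy, h2 y, Abelian.Ext.comp_zero]

theorem EV.right {N₁ N₂ N₃ : Type u} [AddCommGroup N₁] [Module B N₁] [AddCommGroup N₂]
    [Module B N₂] [AddCommGroup N₃] [Module B N₃] (f : N₁ →ₗ[B] N₂) (g : N₂ →ₗ[B] N₃)
    (h : Function.Exact f g) (hf : Function.Injective f) (hg : Function.Surjective g) {i : ℕ}
    (h1 : EV B i N₁) (h2 : EV B (i + 1) N₂) : EV B (i + 1) N₃ := by
  intro x
  obtain ⟨y, hy⟩ := Abelian.Ext.contravariant_sequence_exact₃ (sesOf_shortExact f g h hf hg)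
    (ModuleCat.of B B) x (h2 _) (add_comm 1 i)
  rw [← hy, h1 y, Abelian.Ext.comp_zero]

theorem EV.of_equiv {N₁ N₂ : Type u} [AddCommGroup N₁] [Module B N₁] [AddCommGroup N₂]
    [Module B N₂] (e : N₁ ≃ₗ[B] N₂) {i : ℕ} (h1 : EV B i N₁) : EV B i N₂ := by
  intro x
  have h := h1 ((Abelian.Ext.mk₀ (ModuleCat.ofHom e.toLinearMap)).comp x (zero_add i))
  have h' : (Abelian.Ext.mk₀ (ModuleCat.ofHom e.symm.toLinearMap)).comp
      ((Abelian.Ext.mk₀ (ModuleCat.ofHom e.toLinearMap)).comp x (zero_add i)) (zero_add i)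
        = x := by
    rw [Abelian.Ext.mk₀_comp_mk₀_assoc]
    have : ModuleCat.ofHom e.symm.toLinearMap ≫ ModuleCat.ofHom e.toLinearMap = 𝟙 _ := by
      ext; simp
    rw [this, Abelian.Ext.mk₀_id_comp]
  rw [← h', h, Abelian.Ext.comp_zero]

theorem EV.of_subsingleton {N : Type u} [AddCommGroup N] [Module B N] [Subsingleton N] {i : ℕ} :
    EV B i N := by
  intro x
  have h : (𝟙 (ModuleCat.of B N)) = 0 := by
    ext y; exact Subsingleton.elim (α := N) _ _
  rw [← Abelian.Ext.mk₀_id_comp x, h, Abelian.Ext.mk₀_zero, Abelian.Ext.zero_comp]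

theorem EV.self (i : ℕ) : EV B (i + 1) B := by
  intro x
  have : Projective (ModuleCat.of B B) := ModuleCat.projective_of_free (Module.Basis.singleton Unit B)
  exact Abelian.Ext.eq_zero_of_projective x

/-- `B → B → B/t`. -/
theorem exact_mul_mk (t : B) :
    Function.Exact (LinearMap.mulLeft B t) (Ideal.Quotient.mkₐ B (Ideal.span {t})).toLinearMap := by
  intro x
  simp only [AlgHom.toLinearMap_apply, Ideal.Quotient.mkₐ_eq_mk, Ideal.Quotient.eq_zero_iff_mem,
    Ideal.mem_span_singleton', Set.mem_range, LinearMap.mulLeft_apply]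
  simp [mul_comm]

theorem inj_mulLeft {t : B} (ht : t ∈ nonZeroDivisors B) :
    Function.Injective (LinearMap.mulLeft B t) := by
  intro x y h
  exact (mul_cancel_left_mem_nonZeroDivisors ht).mp (by simpa using h)

theorem EV.quot {t : B} (ht : t ∈ nonZeroDivisors B) (i : ℕ) :
    EV B (i + 2) (B ⧸ Ideal.span {t}) :=
  EV.right _ _ (exact_mul_mk t) (inj_mulLeft ht) Ideal.Quotient.mk_surjective
    (EV.self i) (EV.self (i + 1))

theorem extend_hom {t : B} (ht : t ∈ nonZeroDivisors B)
    {N₁ N₂ N₃ : Type u} [AddCommGroup N₁] [Module B N₁] [AddCommGroup N₂]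
    [Module B N₂] [AddCommGroup N₃] [Module B N₃] (ι : N₁ →ₗ[B] N₂) (π : N₂ →ₗ[B] N₃)
    (h : Function.Exact ι π) (hf : Function.Injective ι) (hg : Function.Surjective π)
    (h3 : EV B 2 N₃) (hk : ∀ y : N₂, t • y = 0) (f : N₁ →ₗ[B] B ⧸ Ideal.span {t}) :
    ∃ g : N₂ →ₗ[B] B ⧸ Ideal.span {t}, g ∘ₗ ι = f := by
  have hT := sesOf_shortExact _ _ (exact_mul_mk t) (inj_mulLeft ht) Ideal.Quotient.mk_surjective
  have hS := sesOf_shortExact ι π h hf hg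
  let F : ModuleCat.of B N₁ ⟶ ModuleCat.of B (B ⧸ Ideal.span {t}) := ModuleCat.ofHom f
  obtain ⟨e, he⟩ := Abelian.Ext.contravariant_sequence_exact₁ hS
    (ModuleCat.of B B) ((Abelian.Ext.mk₀ F).comp hT.extClass (zero_add 1)) rfl (h3 _)
  have hzero : ModuleCat.ofHom (LinearMap.mulLeft B t) = t • 𝟙 (ModuleCat.of B B) := by
    ext; simp
  have hzero' : t • 𝟙 (ModuleCat.of B N₂) = 0 := by
    ext y; exact hk y
  have het : Abelian.Ext.comp e (Abelian.Ext.mk₀ (sesOf _ _ (exact_mul_mk t)).f) (add_zero 1)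
      = 0 := by
    change Abelian.Ext.comp e (Abelian.Ext.mk₀ (ModuleCat.ofHom (LinearMap.mulLeft B t)))
      (add_zero 1) = 0
    rw [hzero, Abelian.Ext.mk₀_smul, Abelian.Ext.comp_smul, Abelian.Ext.comp_mk₀_id]
    have : e = (Abelian.Ext.mk₀ (𝟙 (ModuleCat.of B N₂))).comp e (zero_add 1) :=
      (Abelian.Ext.mk₀_id_comp e).symm
    rw [this, ← Abelian.Ext.smul_comp, ← Abelian.Ext.mk₀_smul, hzero', Abelian.Ext.mk₀_zero,
      Abelian.Ext.zero_comp]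
  obtain ⟨g', hg'⟩ := Abelian.Ext.covariant_sequence_exact₁ _ hT e het (zero_add 1)
  obtain ⟨G, rfl⟩ := Abelian.Ext.homEquiv₀.symm.surjective g'
  let G' : ModuleCat.of B N₂ ⟶ ModuleCat.of B (B ⧸ Ideal.span {t}) := G
  have hd : (Abelian.Ext.mk₀ (ModuleCat.ofHom ι ≫ G' - F)).comp hT.extClass (zero_add 1) = 0 := by
    rw [sub_eq_add_neg, Abelian.Ext.mk₀_add, Abelian.Ext.mk₀_neg, Abelian.Ext.add_comp,
      Abelian.Ext.neg_comp, ← he, ← hg', ← sub_eq_add_neg, sub_eq_zero,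
      ← Abelian.Ext.mk₀_comp_mk₀]
    exact Abelian.Ext.comp_assoc _ _ _ _ _ (by rfl)
  obtain ⟨z, hz⟩ := Abelian.Ext.covariant_sequence_exact₃ _ hT _ (zero_add 1) hd
  obtain ⟨Z, rfl⟩ := Abelian.Ext.homEquiv₀.symm.surjective z
  let Z' : ModuleCat.of B N₁ ⟶ ModuleCat.of B B := Z
  have hZ : Z = 0 := by
    change Z' = 0
    ext y
    have h1 : t • y = 0 := hf (by rw [map_smul, hk, map_zero])
    have h2 : t * Z'.hom y = 0 := by
      rw [← smul_eq_mul, ← map_smul]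
      rw [h1, map_zero]
    exact (mul_left_mem_nonZeroDivisors_eq_zero_iff ht).mp h2
  rw [hZ] at hz
  have hz' : ModuleCat.ofHom ι ≫ G' - F = 0 := by
    apply Abelian.Ext.homEquiv₀.symm.injective
    refine hz.symm.trans ?_
    simp
  refine ⟨G'.hom, ?_⟩
  have h4 : ModuleCat.ofHom ι ≫ G' = F := sub_eq_zero.mp hz'
  exact congrArg ModuleCat.Hom.hom h4

end CondHelpers

section Local

variable {B : Type u} [CommRing B] [IsLocalRing B]

theorem socle_map {M : Type u} [AddCommGroup M] [Module B M] (y : M) (hy : y ≠ 0)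
    (hm : ∀ a ∈ IsLocalRing.maximalIdeal B, a • y = 0) :
    ∃ ι : (B ⧸ IsLocalRing.maximalIdeal B) →ₗ[B] M, Function.Injective ι ∧
      ι (Ideal.Quotient.mk _ 1) = y := by
  refine ⟨Submodule.liftQ _ (LinearMap.toSpanSingleton B M y) (fun a ha => ?_), ?_, ?_⟩
  · simpa using hm a ha
  · rw [← LinearMap.ker_eq_bot]
    refine Submodule.ker_liftQ_eq_bot _ _ _ (fun a ha => ?_)
    by_contra hc
    have hu : IsUnit a := by simpa using hc
    have : a • y = 0 := by simpa using ha
    exact hy (hu.smul_eq_zero.mp this)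
  · exact one_smul B y

theorem prime_eq_max (hdim : ringKrullDim B = 1) {t : B} (ht : t ∈ nonZeroDivisors B)
    (p : Ideal B) (hp : p.IsPrime) (htp : t ∈ p) : p = IsLocalRing.maximalIdeal B := by
  have : Ring.KrullDimLE 1 B := Ring.krullDimLE_iff.mpr (by simp [hdim])
  rcases Ring.krullDimLE_one_iff.mp this p hp with h | h
  · exact absurd ht (notMem_nonZeroDivisors_of_mem_mem_minimalPrimes htp h)
  · exact IsLocalRing.eq_maximalIdeal h

variable [IsNoetherianRing B]

theorem exists_socle (hdim : ringKrullDim B = 1) {t : B} (ht : t ∈ nonZeroDivisors B)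
    (htm : t ∈ IsLocalRing.maximalIdeal B) :
    ∃ y : B ⧸ Ideal.span {t}, y ≠ 0 ∧ ∀ a ∈ IsLocalRing.maximalIdeal B, a • y = 0 := by
  have : Nontrivial (B ⧸ Ideal.span {t}) := by
    refine Ideal.Quotient.nontrivial_iff.mpr (fun h => ?_)
    exact (IsLocalRing.mem_maximalIdeal t).mp htm (Ideal.span_singleton_eq_top.mp h)
  obtain ⟨x, hx⟩ := exists_ne (0 : B ⧸ Ideal.span {t})
  obtain ⟨p, hp⟩ := associatedPrimes.nonempty B (B ⧸ Ideal.span {t})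
  have hpp := hp.isPrime
  obtain ⟨y, hy⟩ := (isAssociatedPrime_iff_exists_injective_linearMap _ _).mp hp |>.2
  have hann : ∀ a ∈ p, a • y (Ideal.Quotient.mk p 1) = 0 := by
    intro a ha
    rw [← map_smul]
    have : a • (Ideal.Quotient.mk p 1) = 0 := by
      rw [← Ideal.Quotient.mk_eq_mk, ← Submodule.Quotient.mk_smul]
      simpa [Ideal.Quotient.eq_zero_iff_mem] using ha
    rw [this, map_zero]
  have hne : y (Ideal.Quotient.mk p 1) ≠ 0 := by
    intro h
    have h0 := hy (h.trans (map_zero y).symm)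
    exact hpp.ne_top ((Ideal.eq_top_iff_one _).mpr (Ideal.Quotient.eq_zero_iff_mem.mp h0))
  have htp : t ∈ p := by
    have h0 : t • y (Ideal.Quotient.mk p 1) = 0 := by
      obtain ⟨z, hz⟩ := Ideal.Quotient.mk_surjective (y (Ideal.Quotient.mk p 1))
      rw [← hz, ← Ideal.Quotient.mk_eq_mk, ← Submodule.Quotient.mk_smul]
      exact Ideal.Quotient.eq_zero_iff_mem.mpr
        (Ideal.mul_mem_right _ _ (Ideal.mem_span_singleton_self t))
    rw [← map_smul] at h0
    have h1 := hy (h0.trans (map_zero y).symm)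
    rw [← Ideal.Quotient.mk_eq_mk, ← Submodule.Quotient.mk_smul] at h1
    have := Ideal.Quotient.eq_zero_iff_mem.mp h1
    simpa using this
  refine ⟨_, hne, fun a ha => hann a ?_⟩
  rwa [prime_eq_max hdim ht p hpp htp]

theorem devissage (hdim : ringKrullDim B = 1) {t : B} (ht : t ∈ nonZeroDivisors B)
    {i : ℕ} (hk : EV B i (B ⧸ IsLocalRing.maximalIdeal B))
    (N : Type u) [AddCommGroup N] [Module B N] [Module.Finite B N] (htN : ∀ y : N, t • y = 0) :
    EV B i N := by
  revert htN
  refine IsNoetherianRing.induction_on_isQuotientEquivQuotientPrime B (M := N) inferInstance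
    (motive := fun N _ _ _ => (∀ y : N, t • y = 0) → EV B i N) ?_ ?_ ?_
  · intro N _ _ _ _ _
    exact EV.of_subsingleton
  · intro N _ _ _ p e h
    have htp : t ∈ p.1 := by
      have h1 : t • (Ideal.Quotient.mk p.1 1) = 0 := by
        rw [← e.apply_symm_apply (Ideal.Quotient.mk p.1 1), ← map_smul, h, map_zero]
      have := Ideal.Quotient.eq_zero_iff_mem.mp h1
      simpa using this
    have hp := prime_eq_max hdim ht p.1 p.2 htp
    rw [hp] at e
    exact EV.of_equiv e.symm hk
  · intro N₁ _ _ _ N₂ _ _ _ N₃ _ _ _ f g hf hg hfg h1 h3 h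
    refine EV.mid f g hfg hf hg (h1 fun y => hf ?_) (h3 fun y => ?_)
    · rw [map_smul, h, map_zero]
    · obtain ⟨z, rfl⟩ := hg y
      rw [← map_smul, h, map_zero]

theorem smul_quot_zero {I : Ideal B} {t : B} (ht : t ∈ I) (y : B ⧸ I) : t • y = 0 := by
  obtain ⟨z, rfl⟩ := Ideal.Quotient.mk_surjective y
  exact Ideal.Quotient.eq_zero_iff_mem.mpr (Ideal.mul_mem_right _ _ ht)

theorem smul_quot_quot_zero {I : Ideal B} {t : B} (ht : t ∈ I) (P : Submodule B (B ⧸ I))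
    (y : (B ⧸ I) ⧸ P) : t • y = 0 := by
  obtain ⟨z, rfl⟩ := Submodule.mkQ_surjective P y
  rw [← map_smul, smul_quot_zero ht, map_zero]

theorem descent (hdim : ringKrullDim B = 1) {t : B} (ht : t ∈ nonZeroDivisors B)
    (htm : t ∈ IsLocalRing.maximalIdeal B) {i : ℕ}
    (hk : EV B (i + 3) (B ⧸ IsLocalRing.maximalIdeal B)) :
    EV B (i + 2) (B ⧸ IsLocalRing.maximalIdeal B) := by
  obtain ⟨y, hy, hym⟩ := exists_socle hdim ht htm
  obtain ⟨ι, hι, -⟩ := socle_map y hy hym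
  exact EV.left ι (LinearMap.range ι).mkQ (LinearMap.exact_map_mkQ_range ι) hι
    (Submodule.mkQ_surjective _) (EV.quot ht i)
    (devissage hdim ht hk _ (smul_quot_quot_zero (Ideal.mem_span_singleton_self t) _))

theorem gorenstein_EV (h : IsGorensteinLocalRing B) :
    ∃ n, ∀ i, n < i → EV B i (B ⧸ IsLocalRing.maximalIdeal B) := by
  obtain ⟨-, n, hn⟩ := h
  refine ⟨n, fun i hi => ?_⟩
  intro x
  have hs := hn i hi
  let P := ProjectiveResolution.of (ModuleCat.of B (IsLocalRing.ResidueField B))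
  obtain ⟨p, rfl⟩ : ∃ p, i = p + 1 := ⟨i - 1, by omega⟩
  obtain ⟨f, hf, hfx⟩ := P.extMk_surjective
    (show Abelian.Ext (ModuleCat.of B (IsLocalRing.ResidueField B)) (ModuleCat.of B B) (p + 1)
      from x) (p + 2) rfl
  refine hfx.symm.trans ?_
  refine (P.extMk_eq_zero_iff _ _ _ _ p rfl).mpr ?_
  have hz : Limits.IsZero ((P.complex.linearYonedaObj B (ModuleCat.of B B)).homology (p + 1)) :=
    Limits.IsZero.of_iso (ModuleCat.isZero_of_subsingleton _) (P.isoExt (p + 1) _).symm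
  rw [← HomologicalComplex.exactAt_iff_isZero_homology,
    HomologicalComplex.exactAt_iff' _ p (p + 1) (p + 2) (by simp) (by simp),
    ShortComplex.moduleCat_exact_iff] at hz
  obtain ⟨g, hg⟩ := hz f hf
  exact ⟨g, hg⟩

theorem EV_two (hdim : ringKrullDim B = 1) (h : IsGorensteinLocalRing B)
    {t : B} (ht : t ∈ nonZeroDivisors B)
    (htm : t ∈ IsLocalRing.maximalIdeal B) : EV B 2 (B ⧸ IsLocalRing.maximalIdeal B) := by
  obtain ⟨n, hn⟩ := gorenstein_EV h
  have : ∀ m, EV B (m + 2) (B ⧸ IsLocalRing.maximalIdeal B) →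
      EV B 2 (B ⧸ IsLocalRing.maximalIdeal B) := by
    intro m
    induction m with
    | zero => exact id
    | succ m ih => exact fun hm => ih (descent hdim ht htm hm)
  exact this n (hn _ (by omega))

theorem double_ann (hdim : ringKrullDim B = 1) (h : IsGorensteinLocalRing B)
    {t : B} (ht : t ∈ nonZeroDivisors B) (htm : t ∈ IsLocalRing.maximalIdeal B)
    (I : Ideal B) (htI : t ∈ I) (j : B) (hj : j ∉ I) :
    ∃ c : B, (∀ b ∈ I, c * b ∈ Ideal.span {t}) ∧ c * j ∉ Ideal.span {t} := by
  let I' := I ⊔ IsLocalRing.maximalIdeal B * Ideal.span {j}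
  have hj' : j ∉ I' := by
    intro hc
    obtain ⟨b, hb, z, hz, hbz⟩ := Submodule.mem_sup.mp hc
    obtain ⟨a, ha, rfl⟩ := Ideal.mem_mul_span_singleton.mp hz
    have hu : IsUnit (1 - a) := by
      by_contra hn
      have := Ideal.add_mem _ ((IsLocalRing.mem_maximalIdeal _).mpr hn) ha
      rw [sub_add_cancel] at this
      exact (Ideal.ne_top_iff_one _).mp (IsLocalRing.maximalIdeal.isMaximal B).ne_top this
    have h1 : (1 - a) * j ∈ I := by
      have : (1 - a) * j = b := by linear_combination -hbz
      rwa [this]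
    exact hj ((Ideal.unit_mul_mem_iff_mem I hu).mp h1)
  have htI' : t ∈ I' := Ideal.mem_sup_left htI
  obtain ⟨ι, hι, hι1⟩ := socle_map (M := B ⧸ I') (Ideal.Quotient.mk I' j)
    (fun h0 => hj' (Ideal.Quotient.eq_zero_iff_mem.mp h0)) (fun a ha => by
      refine (Submodule.Quotient.mk_eq_zero (I' : Submodule B B) (x := a * j)).mpr ?_
      exact Ideal.mem_sup_right (Ideal.mul_mem_mul ha (Ideal.mem_span_singleton_self j)))
  obtain ⟨y, hy, hym⟩ := exists_socle hdim ht htm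
  obtain ⟨f, -, hf1⟩ := socle_map y hy hym
  obtain ⟨g, hg⟩ := extend_hom ht ι (LinearMap.range ι).mkQ (LinearMap.exact_map_mkQ_range ι) hι
    (Submodule.mkQ_surjective _)
    (devissage hdim ht (EV_two hdim h ht htm) _ (smul_quot_quot_zero htI' _))
    (smul_quot_zero htI') f
  obtain ⟨c, hc⟩ := Ideal.Quotient.mk_surjective (g (Ideal.Quotient.mk I' 1))
  have key : ∀ b : B, g (Ideal.Quotient.mk I' b) = Ideal.Quotient.mk _ (c * b) := by
    intro b
    have : Ideal.Quotient.mk I' b = b • Ideal.Quotient.mk I' 1 := by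
      rw [Algebra.smul_def, map_one, mul_one]; rfl
    rw [this, map_smul, ← hc, Algebra.smul_def, mul_comm, map_mul]; rfl
  refine ⟨c, fun b hb => ?_, fun hcj => ?_⟩
  · rw [← Ideal.Quotient.eq_zero_iff_mem, ← key, Ideal.Quotient.eq_zero_iff_mem.mpr
      (Ideal.mem_sup_left hb), map_zero]
  · apply hy
    rw [← Ideal.Quotient.eq_zero_iff_mem, ← key, ← hι1] at hcj
    rw [← hf1, ← hg]
    exact hcj

end Local

theorem mem_conductorIdeal_iff {B A : Type*} [CommRing B] [CommRing A] [Algebra B A] (x : B) :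
    x ∈ conductorIdeal B A ↔ ∀ a : A, ∃ b : B, algebraMap B A b = algebraMap B A x * a := by
  unfold conductorIdeal
  rw [Module.mem_annihilator]
  constructor
  · intro h a
    have := h (Submodule.Quotient.mk a)
    rw [← Submodule.Quotient.mk_smul, Submodule.Quotient.mk_eq_zero] at this
    obtain ⟨b, hb⟩ := this
    exact ⟨b, by rw [← Algebra.smul_def]; exact hb⟩
  · intro h q
    obtain ⟨a, rfl⟩ := Submodule.Quotient.mk_surjective _ q
    obtain ⟨b, hb⟩ := h a
    rw [← Submodule.Quotient.mk_smul, Submodule.Quotient.mk_eq_zero]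
    exact ⟨b, by rw [Algebra.smul_def]; exact hb⟩

theorem exists_pow_mem {B A : Type*} [CommRing B] [CommRing A] [Algebra B A] [Module.Finite B A]
    (s : B)
    (hloc : ∀ a : A, ∃ (n : ℕ) (b : B), (algebraMap B A s) ^ n * a = algebraMap B A b) :
    ∃ n : ℕ, s ^ (n + 1) ∈ conductorIdeal B A := by
  obtain ⟨S, hS⟩ := (Module.finite_def (R := B) (M := A)).mp inferInstance
  choose n b hb using hloc
  refine ⟨∑ a ∈ S, n a, ?_⟩
  rw [mem_conductorIdeal_iff]
  intro a
  have ha : a ∈ Submodule.span B (S : Set A) := hS ▸ Submodule.mem_top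
  induction ha using Submodule.span_induction with
  | mem x hx =>
    have hle : n x ≤ (∑ a ∈ S, n a) + 1 :=
      (Finset.single_le_sum (f := n) (fun _ _ => Nat.zero_le _) hx).trans (Nat.le_succ _)
    obtain ⟨k, hk⟩ := Nat.exists_eq_add_of_le hle
    refine ⟨s ^ k * b x, ?_⟩
    rw [hk, map_mul, ← hb, map_pow, map_pow]; ring
  | zero => exact ⟨0, by simp⟩
  | add x y _ _ hx hy =>
    obtain ⟨u, hu⟩ := hx
    obtain ⟨v, hv⟩ := hy
    exact ⟨u + v, by rw [map_add, hu, hv]; ring⟩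
  | smul r x _ hx =>
    obtain ⟨u, hu⟩ := hx
    exact ⟨r * u, by rw [map_mul, hu, Algebra.smul_def]; ring⟩

/-- Let `B` be a one-dimensional complete local Gorenstein ring and `𝔠` the
conductor of a finite birational extension `B ⊆ A` with `A` maximal Cohen–Macaulay.  Then the
natural map `A → Hom_B(𝔠, B)`, `a ↦ (x ↦ ax)`, is an isomorphism of `B`-modules. -/
theorem conductor_hom_bijective (B A : Type*) [CommRing B] [IsLocalRing B]
    [IsNoetherianRing B] [IsAdicComplete (IsLocalRing.maximalIdeal B) B]
    (hdim : ringKrullDim B = 1) (hGor : IsGorensteinLocalRing B)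
    [CommRing A] [Algebra B A] (hinj : Function.Injective (algebraMap B A))
    [Module.Finite B A]
    (s : B) (hs : s ∈ IsLocalRing.maximalIdeal B) (hreg : s ∈ nonZeroDivisors B)
    (hregA : algebraMap B A s ∈ nonZeroDivisors A)
    (hloc : ∀ a : A, ∃ (n : ℕ) (b : B), (algebraMap B A s) ^ n * a = algebraMap B A b) :
    ∃ Φ : A →ₗ[B] (↥(conductorIdeal B A) →ₗ[B] B),
      (∀ (a : A) (x : ↥(conductorIdeal B A)),
        algebraMap B A (Φ a x) = algebraMap B A (x : B) * a) ∧
      Function.Bijective Φ := by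
  have hc : ∀ (a : A) (x : ↥(conductorIdeal B A)),
      ∃ b : B, algebraMap B A b = algebraMap B A (x : B) * a :=
    fun a x => (mem_conductorIdeal_iff _).mp x.2 a
  choose φ hφ using hc
  let Φ : A →ₗ[B] (↥(conductorIdeal B A) →ₗ[B] B) := LinearMap.mk₂ B φ
    (fun a a' x => hinj (by simp only [map_add, hφ]; ring))
    (fun r a x => hinj (by simp only [smul_eq_mul, map_mul, hφ, Algebra.smul_def]; ring))
    (fun a x x' => hinj (by simp only [map_add, hφ, Submodule.coe_add]; ring))
    (fun r a x => hinj (by simp only [smul_eq_mul, map_mul, hφ, Submodule.coe_smul]; ring))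
  have hΦ : ∀ (a : A) (x : ↥(conductorIdeal B A)),
      algebraMap B A (Φ a x) = algebraMap B A (x : B) * a := hφ
  obtain ⟨n, hn⟩ := exists_pow_mem s hloc
  have ht : s ^ (n + 1) ∈ nonZeroDivisors B := pow_mem hreg _
  have htA : algebraMap B A (s ^ (n + 1)) ∈ nonZeroDivisors A := by
    rw [map_pow]; exact pow_mem hregA _
  have htm : s ^ (n + 1) ∈ IsLocalRing.maximalIdeal B :=
    Ideal.pow_mem_of_mem _ hs _ (Nat.succ_pos n)
  generalize s ^ (n + 1) = t at hn ht htA htm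
  refine ⟨Φ, hΦ, ?_, ?_⟩
  · intro a a' haa
    have h1 := hΦ a ⟨t, hn⟩
    rw [haa, hΦ a' ⟨t, hn⟩] at h1
    exact ((mul_cancel_left_mem_nonZeroDivisors htA).mp h1).symm
  · intro ψ
    let I : Ideal B := (Ideal.span {algebraMap B A t}).comap (algebraMap B A)
    have hmemI : ∀ b : B, b ∈ I ↔ ∃ a : A, algebraMap B A b = algebraMap B A t * a := by
      intro b
      rw [Ideal.mem_comap, Ideal.mem_span_singleton]; rfl
    have htI : t ∈ I := (hmemI t).mpr ⟨1, by simp⟩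
    have hj : ψ ⟨t, hn⟩ ∈ I := by
      by_contra hj
      obtain ⟨c, hcI, hcj⟩ := double_ann hdim hGor ht htm I htI _ hj
      have hcc : c ∈ conductorIdeal B A := by
        rw [mem_conductorIdeal_iff]
        intro a
        obtain ⟨b, hb⟩ := (mem_conductorIdeal_iff t).mp hn a
        obtain ⟨b', hb'⟩ := Ideal.mem_span_singleton.mp (hcI b ((hmemI b).mpr ⟨a, hb⟩))
        refine ⟨b', (mul_cancel_left_mem_nonZeroDivisors htA).mp ?_⟩
        rw [← map_mul, ← hb', map_mul, hb]; ring
      apply hcj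
      have : c * ψ ⟨t, hn⟩ = t * ψ ⟨c, hcc⟩ := by
        rw [← smul_eq_mul, ← map_smul, ← smul_eq_mul, ← map_smul]
        congr 1
        exact Subtype.ext (mul_comm c t)
      rw [this]
      exact Ideal.mul_mem_right _ _ (Ideal.mem_span_singleton_self t)
    obtain ⟨a, ha⟩ := (hmemI _).mp hj
    refine ⟨a, LinearMap.ext fun x => hinj ?_⟩
    rw [hΦ]
    apply (mul_cancel_left_mem_nonZeroDivisors htA).mp
    have : (x : B) * ψ ⟨t, hn⟩ = t * ψ x := by
      rw [← smul_eq_mul, ← map_smul, ← smul_eq_mul, ← map_smul]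
      congr 1
      exact Subtype.ext (mul_comm (x : B) t)
    rw [← map_mul _ t (ψ x), ← this, map_mul, ha]
    ring
end
end
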